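/- arXiv:0907.4470 — 13 statements merged into one kernel-verified Lean document; each statement's English description precedes it below -/
import Mathlib

section
/- Let t : V → V be a linear map admitting an adjoint t*, and let p₁,…,p_m, q, v₂,…,v_m ∈ V with ⟨p_a, q⟩ = 0 for all a = 1,…,m. Then ⟨D_t(p₁∧⋯∧p_m), q∧v₂∧⋯∧v_m⟩ = ⟨p₁∧⋯∧p_m, t*q∧v₂∧⋯∧v_m⟩, where both pairings are taken in the induced hermitian form on ⋀^m V. -/
/-- The wedge `v 0 ∧ ⋯ ∧ v (m-1)` as an element of the `m`-th exterior power `⋀[R]^m V`. -/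
noncomputable def wedge (R : Type*) [CommRing R] {V : Type*} [AddCommGroup V] [Module R V]
    (m : ℕ) (v : Fin m → V) : ⋀[R]^m V :=
  ⟨ExteriorAlgebra.ιMulti R m v,
    ExteriorAlgebra.ιMulti_range R m (Set.mem_range_self v)⟩

/-- first identity of Lemma 2.3: for a linear map `t : V → V` with adjoint
`ts`, vectors `p₁,…,p_{m+1}`, `q`, `v₂,…,v_{m+1}` with `⟨p_a, q⟩ = 0` for all `a`, one has
`⟨D_t(p₁∧⋯∧p_{m+1}), q∧v₂∧⋯∧v_{m+1}⟩ = ⟨p₁∧⋯∧p_{m+1}, t*q∧v₂∧⋯∧v_{m+1}⟩`. -/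
theorem statement3 {𝕜 : Type*} [RCLike 𝕜] {V : Type*} [AddCommGroup V] [Module 𝕜 V]
    [FiniteDimensional 𝕜 V]
    (φ : V →ₗ[𝕜] V →ₛₗ[starRingEnd 𝕜] 𝕜)
    (hherm : ∀ x y : V, φ x y = starRingEnd 𝕜 (φ y x))
    (hnd : ∀ x : V, (∀ y : V, φ x y = 0) → x = 0)
    (m : ℕ)
    (Φ : ⋀[𝕜]^(m + 1) V →ₗ[𝕜] ⋀[𝕜]^(m + 1) V →ₛₗ[starRingEnd 𝕜] 𝕜)
    (hΦ : ∀ v w : Fin (m + 1) → V,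
      Φ (wedge 𝕜 (m + 1) v) (wedge 𝕜 (m + 1) w) = (Matrix.of fun i j => φ (v i) (w j)).det)
    (t ts : V →ₗ[𝕜] V)
    (hadj : ∀ v w : V, φ (t v) w = φ v (ts w))
    (D : ⋀[𝕜]^(m + 1) V →ₗ[𝕜] ⋀[𝕜]^(m + 1) V)
    (hD : ∀ v : Fin (m + 1) → V,
      D (wedge 𝕜 (m + 1) v) = ∑ i, wedge 𝕜 (m + 1) (Function.update v i (t (v i))))
    (pv : Fin (m + 1) → V) (q : V) (vv : Fin m → V)
    (horth : ∀ a, φ (pv a) q = 0) :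
    Φ (D (wedge 𝕜 (m + 1) pv)) (wedge 𝕜 (m + 1) (Fin.cons q vv)) =
      Φ (wedge 𝕜 (m + 1) pv) (wedge 𝕜 (m + 1) (Fin.cons (ts q) vv)) := by
  rw [hD, map_sum, LinearMap.sum_apply, hΦ, Matrix.det_succ_column_zero]
  refine Finset.sum_congr rfl fun a _ => ?_
  rw [hΦ, Matrix.det_succ_column_zero, Finset.sum_eq_single a]
  · have h : (Matrix.of fun i j => φ (Function.update pv a (t (pv a)) i)
          ((Fin.cons q vv : Fin (m + 1) → V) j)).submatrix a.succAbove Fin.succ =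
        (Matrix.of fun i j => φ (pv i)
          ((Fin.cons (ts q) vv : Fin (m + 1) → V) j)).submatrix a.succAbove Fin.succ := by
      ext i j
      simp [Function.update_of_ne (Fin.succAbove_ne a i)]
    rw [h]
    simp [hadj]
  · intro b _ hb
    simp [Function.update_of_ne hb, horth]
  · simp
end

section
/- Let t₁, t₂ : V → V be linear maps admitting adjoints t₁*, t₂*, and let p₁,…,p_m, q₁, q₂, v₃,…,v_m ∈ V with ⟨p_a, q₁⟩ = ⟨p_a, q₂⟩ = 0 for all a = 1,…,m. Then ⟨B(t₁,t₂)(p₁∧⋯∧p_m), q₁∧q₂∧v₃∧⋯∧v_m⟩ = ⟨p₁∧⋯∧p_m, t₁*q₁∧t₂*q₂∧v₃∧⋯∧v_m⟩ + ⟨p₁∧⋯∧p_m, t₂*q₁∧t₁*q₂∧v₃∧⋯∧v_m⟩, where the pairings are taken in the induced hermitian form on ⋀^m V. -/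
/-- second identity of Lemma 2.3: for linear maps `t₁, t₂ : V → V` with
adjoints `ts₁, ts₂`, vectors `p₁,…,p_{m+2}`, `q₁, q₂`, `v₃,…,v_{m+2}` with
`⟨p_a, q₁⟩ = ⟨p_a, q₂⟩ = 0` for all `a`, one has
`⟨B(t₁,t₂)(p₁∧⋯∧p_{m+2}), q₁∧q₂∧v₃∧⋯∧v_{m+2}⟩ =
  ⟨p₁∧⋯∧p_{m+2}, t₁*q₁∧t₂*q₂∧v₃∧⋯∧v_{m+2}⟩ + ⟨p₁∧⋯∧p_{m+2}, t₂*q₁∧t₁*q₂∧v₃∧⋯∧v_{m+2}⟩`. -/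
theorem statement4 {𝕜 : Type*} [RCLike 𝕜] {V : Type*} [AddCommGroup V] [Module 𝕜 V]
    [FiniteDimensional 𝕜 V]
    (φ : V →ₗ[𝕜] V →ₛₗ[starRingEnd 𝕜] 𝕜)
    (hherm : ∀ x y : V, φ x y = starRingEnd 𝕜 (φ y x))
    (hnd : ∀ x : V, (∀ y : V, φ x y = 0) → x = 0)
    (m : ℕ)
    (Φ : ⋀[𝕜]^(m + 2) V →ₗ[𝕜] ⋀[𝕜]^(m + 2) V →ₛₗ[starRingEnd 𝕜] 𝕜)
    (hΦ : ∀ v w : Fin (m + 2) → V,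
      Φ (wedge 𝕜 (m + 2) v) (wedge 𝕜 (m + 2) w) = (Matrix.of fun i j => φ (v i) (w j)).det)
    (t₁ t₂ ts₁ ts₂ : V →ₗ[𝕜] V)
    (hadj₁ : ∀ v w : V, φ (t₁ v) w = φ v (ts₁ w))
    (hadj₂ : ∀ v w : V, φ (t₂ v) w = φ v (ts₂ w))
    (B : ⋀[𝕜]^(m + 2) V →ₗ[𝕜] ⋀[𝕜]^(m + 2) V)
    (hB : ∀ v : Fin (m + 2) → V,
      B (wedge 𝕜 (m + 2) v) = ∑ i, ∑ j, if i = j then 0 else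
        wedge 𝕜 (m + 2) (Function.update (Function.update v i (t₁ (v i))) j (t₂ (v j))))
    (pv : Fin (m + 2) → V) (q₁ q₂ : V) (vv : Fin m → V)
    (horth₁ : ∀ a, φ (pv a) q₁ = 0) (horth₂ : ∀ a, φ (pv a) q₂ = 0) :
    Φ (B (wedge 𝕜 (m + 2) pv)) (wedge 𝕜 (m + 2) (Fin.cons q₁ (Fin.cons q₂ vv))) =
      Φ (wedge 𝕜 (m + 2) pv) (wedge 𝕜 (m + 2) (Fin.cons (ts₁ q₁) (Fin.cons (ts₂ q₂) vv))) +
      Φ (wedge 𝕜 (m + 2) pv) (wedge 𝕜 (m + 2) (Fin.cons (ts₂ q₁) (Fin.cons (ts₁ q₂) vv))) := by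
  classical
  have key : ∀ (σ : Equiv.Perm (Fin (m + 2))) (i j : Fin (m + 2)),
      (if i = j then (0 : 𝕜) else
        ∏ k, φ ((Function.update (Function.update pv i (t₁ (pv i))) j (t₂ (pv j))) (σ k))
          ((Fin.cons q₁ (Fin.cons q₂ vv) : Fin (m + 2) → V) k)) =
      (if i = σ 0 then (if j = σ 1 then
        ∏ k, φ (pv (σ k)) ((Fin.cons (ts₁ q₁) (Fin.cons (ts₂ q₂) vv) : Fin (m + 2) → V) k)
          else 0) else 0) +
      (if i = σ 1 then (if j = σ 0 then
        ∏ k, φ (pv (σ k)) ((Fin.cons (ts₂ q₁) (Fin.cons (ts₁ q₂) vv) : Fin (m + 2) → V) k)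
          else 0) else 0) := by
    intro σ i j
    have h01 : σ 0 ≠ σ 1 := fun h => by simpa using σ.injective h
    have h0 : ∀ k : Fin m, σ k.succ.succ ≠ σ 0 := fun k h => by
      have := congrArg Fin.val (σ.injective h)
      simp at this
    have h1 : ∀ k : Fin m, σ k.succ.succ ≠ σ 1 := fun k h => by
      have := congrArg Fin.val (σ.injective h)
      simp at this
    have e : (Fin.succ 0 : Fin (m + 2)) = 1 := rfl
    simp only [Fin.prod_univ_succ (n := m + 1), Fin.prod_univ_succ (n := m), Fin.cons_zero,
      Fin.cons_succ, e]
    by_cases hij : i = j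
    · subst hij
      by_cases ha : i = σ 0
      · subst ha; simp [h01]
      · simp [ha]
    rw [if_neg hij]
    by_cases hi0 : i = σ 0
    · subst hi0
      by_cases hj : j = σ 1
      · subst hj
        simp [h01, h0, h1, Function.update_of_ne, hadj₁, hadj₂]
      · have hj' : σ 1 ≠ j := fun h => hj h.symm
        simp [h01, h01.symm, hj, Function.update_of_ne hj', Function.update_of_ne h01.symm, horth₂]
    · have hi0' : σ 0 ≠ i := fun h => hi0 h.symm
      by_cases hj : j = σ 0
      · subst hj
        by_cases hi : i = σ 1
        · subst hi
          simp [h01, h01.symm, h0, h1, Function.update_of_ne, hadj₁, hadj₂]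
        · have hi' : σ 1 ≠ i := fun h => hi h.symm
          simp [hi0, hi, Function.update_of_ne hi', Function.update_of_ne h01.symm, horth₂]
      · have hj' : σ 0 ≠ j := fun h => hj h.symm
        simp [hi0, hj, Function.update_of_ne hi0', Function.update_of_ne hj', horth₁]
  have hL : Φ (B (wedge 𝕜 (m + 2) pv)) (wedge 𝕜 (m + 2) (Fin.cons q₁ (Fin.cons q₂ vv))) =
      ∑ i, ∑ j, ∑ σ : Equiv.Perm (Fin (m + 2)), ((Equiv.Perm.sign σ : ℤ) : 𝕜) *
      (if i = j then (0 : 𝕜) else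
        ∏ k, φ ((Function.update (Function.update pv i (t₁ (pv i))) j (t₂ (pv j))) (σ k))
          ((Fin.cons q₁ (Fin.cons q₂ vv) : Fin (m + 2) → V) k)) := by
    rw [hB]
    simp only [map_sum, LinearMap.sum_apply]
    refine Finset.sum_congr rfl fun i _ => Finset.sum_congr rfl fun j _ => ?_
    split_ifs with h
    · simp
    · rw [hΦ, Matrix.det_apply']
      rfl
  rw [hL, hΦ, hΦ, Matrix.det_apply', Matrix.det_apply', ← Finset.sum_add_distrib]
  simp only [key]
  rw [Finset.sum_congr rfl fun i _ => Finset.sum_comm, Finset.sum_comm]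
  refine Finset.sum_congr rfl fun σ _ => ?_
  simp only [← Finset.mul_sum, ← mul_add]
  congr 1
  simp [Finset.sum_add_distrib]
end

section
/- For all linear maps t, s : V → V and all m, the composite of the derivations D_t and D_s on the m-th exterior power satisfies D_t ∘ D_s = B(t,s) + D_{t∘s} as linear endomorphisms of ⋀^m V. -/
/-- for all linear maps `t, s : V → V` and all `m`, the derivations on the
`m`-th exterior power satisfy `D_t ∘ D_s = B(t,s) + D_{t∘s}`. -/
theorem statement7 {K : Type*} [Field K] {V : Type*} [AddCommGroup V] [Module K V]
    (m : ℕ) (t s : V →ₗ[K] V)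
    (Dt Ds Dts Bts : ⋀[K]^m V →ₗ[K] ⋀[K]^m V)
    (hDt : ∀ v : Fin m → V,
      Dt (wedge K m v) = ∑ i, wedge K m (Function.update v i (t (v i))))
    (hDs : ∀ v : Fin m → V,
      Ds (wedge K m v) = ∑ i, wedge K m (Function.update v i (s (v i))))
    (hDts : ∀ v : Fin m → V,
      Dts (wedge K m v) = ∑ i, wedge K m (Function.update v i (t (s (v i)))))
    (hBts : ∀ v : Fin m → V,
      Bts (wedge K m v) = ∑ i, ∑ j, if i = j then 0 else
        wedge K m (Function.update (Function.update v i (t (v i))) j (s (v j)))) :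
    Dt ∘ₗ Ds = Bts + Dts := by
  apply exteriorPower.linearMap_ext
  ext v
  have hw : exteriorPower.ιMulti K m v = wedge K m v := rfl
  simp only [LinearMap.compAlternatingMap_apply, LinearMap.comp_apply, LinearMap.add_apply, hw,
    hDs, hDts, hBts, map_sum, hDt]
  congr 1
  rw [Finset.sum_comm, ← Finset.sum_add_distrib]
  refine Finset.sum_congr rfl fun i _ => ?_
  have key : wedge K m (Function.update v i (t (s (v i)))) =
      ∑ j, if i = j then wedge K m (Function.update v i (t (s (v i)))) else 0 := by
    simp
  rw [key, ← Finset.sum_add_distrib]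
  refine Finset.sum_congr rfl fun j _ => ?_
  by_cases h : i = j
  · subst h
    simp
  · simp only [if_neg h, add_zero, Function.update_of_ne h]
    rw [Function.update_comm h]
end

section
/- Let p be a K-vector space of finite dimension k and let 1 ≤ m ≤ k. For every linear map φ : p → p, the trace of the derivation D_φ : ⋀^m p → ⋀^m p equals (k−1 choose m−1) times the trace of φ. -/
theorem diag_det {K : Type*} [Field K] {n : ℕ} (A : Matrix (Fin n) (Fin n) K) (c : Fin n → K)
    (i : Fin n) (h : A = (1 : Matrix (Fin n) (Fin n) K).updateRow i c) : A.det = c i := by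
  rw [h, ← Matrix.cramer_transpose_apply]
  simp

theorem count_sum {K : Type*} [Field K] {I : Type*} [DecidableEq I] (u : Finset I) (n : ℕ)
    (f : I → K) : ∑ s ∈ u.powersetCard (n + 1), ∑ x ∈ s, f x
      = ∑ x ∈ u, ((u.card - 1).choose n : K) * f x := by
  have h : ∑ s ∈ u.powersetCard (n + 1), ∑ x ∈ s, f x
      = ∑ x ∈ u, ∑ s ∈ (u.powersetCard (n + 1)).filter (fun s => x ∈ s), f x := by
    apply Finset.sum_comm'
    intro s x
    simp only [Finset.mem_powersetCard, Finset.mem_filter]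
    constructor
    · rintro ⟨⟨a, b⟩, c⟩; exact ⟨⟨⟨a, b⟩, c⟩, a c⟩
    · rintro ⟨⟨⟨a, b⟩, c⟩, _⟩; exact ⟨⟨a, b⟩, c⟩
  rw [h]
  refine Finset.sum_congr rfl fun x hx => ?_
  rw [Finset.sum_const, nsmul_eq_mul]
  congr 2
  have h3 := Finset.card_filter_add_card_filter_not (s := u.powersetCard (n + 1)) (fun s => x ∈ s)
  have h4 : (u.powersetCard (n + 1)).filter (fun s => ¬ x ∈ s)
      = (u.erase x).powersetCard (n + 1) := by
    ext s
    simp only [Finset.mem_powersetCard, Finset.mem_filter, Finset.subset_erase]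
    tauto
  have h5 : 0 < u.card := Finset.card_pos.2 ⟨x, hx⟩
  obtain ⟨q, hq⟩ : ∃ q, u.card = q + 1 := ⟨u.card - 1, by omega⟩
  rw [h4, Finset.card_powersetCard, Finset.card_powersetCard, Finset.card_erase_of_mem hx, hq,
    Nat.choose_succ_succ] at h3
  rw [hq]
  simp only [Nat.add_sub_cancel, Nat.succ_eq_add_one] at h3 ⊢
  omega

/-- if `p` is a `K`-vector space of finite dimension `k` and `1 ≤ m ≤ k`, then
for every linear map `φ : p → p` the trace of the derivation `D_φ : ⋀^m p → ⋀^m p` equals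
`(k−1).choose (m−1)` times the trace of `φ`. -/
theorem statement8 {K : Type*} [Field K] {P : Type*} [AddCommGroup P] [Module K P]
    [FiniteDimensional K P]
    (k : ℕ) (hk : Module.finrank K P = k)
    (m : ℕ) (hm1 : 1 ≤ m) (hmk : m ≤ k)
    (φ : P →ₗ[K] P)
    (D : ⋀[K]^m P →ₗ[K] ⋀[K]^m P)
    (hD : ∀ v : Fin m → P,
      D (wedge K m v) = ∑ i, wedge K m (Function.update v i (φ (v i)))) :
    LinearMap.trace K (⋀[K]^m P) D = ((k - 1).choose (m - 1) : K) * LinearMap.trace K P φ := by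
  classical
  subst hk
  let b := Module.finBasis K P
  obtain ⟨n, rfl⟩ : ∃ n, m = n + 1 := ⟨m - 1, by omega⟩
  obtain ⟨q, hq⟩ : ∃ q, Module.finrank K P = q + 1 := ⟨Module.finrank K P - 1, by omega⟩
  rw [LinearMap.trace_eq_matrix_trace K (b.exteriorPower (n + 1)),
    LinearMap.trace_eq_matrix_trace K b, Matrix.trace, Matrix.trace]
  simp only [Matrix.diag_apply, LinearMap.toMatrix_apply]
  have h1 : ∀ s, (b.exteriorPower (n + 1)).repr (D (b.exteriorPower (n + 1) s)) s
      = ∑ x ∈ s.1, b.repr (φ (b x)) x := by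
    intro s
    have hw : ∀ v : Fin (n + 1) → P, wedge K (n + 1) v = exteriorPower.ιMulti K (n + 1) v :=
      fun v => rfl
    have hs := hD (b ∘ Set.powersetCard.ofFinEmbEquiv.symm s)
    simp only [hw] at hs
    rw [exteriorPower.basis_apply, exteriorPower.ιMulti_family, hs, exteriorPower.basis_repr_apply,
      map_sum]
    simp only [exteriorPower.ιMultiDual_apply_ιMulti]
    have h2 : ∀ i, (Matrix.of fun i' j => b.coord (Set.powersetCard.ofFinEmbEquiv.symm s j)
        (Function.update (b ∘ Set.powersetCard.ofFinEmbEquiv.symm s) i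
          (φ ((b ∘ Set.powersetCard.ofFinEmbEquiv.symm s) i)) i')).det
        = b.repr (φ (b (Set.powersetCard.ofFinEmbEquiv.symm s i)))
          (Set.powersetCard.ofFinEmbEquiv.symm s i) := by
      intro i
      rw [diag_det (c := fun j => b.repr (φ (b (Set.powersetCard.ofFinEmbEquiv.symm s i)))
          (Set.powersetCard.ofFinEmbEquiv.symm s j)) (i := i)]
      ext i' j
      by_cases h : i' = i
      · subst h; simp
      · simp [h, Matrix.one_apply, Finsupp.single_apply]
    rw [Finset.sum_congr rfl fun i _ => h2 i]
    refine Finset.sum_bij (fun i _ => Set.powersetCard.ofFinEmbEquiv.symm s i) ?_ ?_ ?_ ?_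
    · intro i _
      exact (Set.powersetCard.mem_range_ofFinEmbEquiv_symm_iff_mem s _).1 ⟨i, rfl⟩
    · intro i _ j _ h
      exact (Set.powersetCard.ofFinEmbEquiv.symm s).injective h
    · intro x hx
      obtain ⟨i, hi⟩ := (Set.powersetCard.mem_range_ofFinEmbEquiv_symm_iff_mem s x).2 hx
      exact ⟨i, Finset.mem_univ _, hi⟩
    · intro i _; rfl
  rw [Finset.sum_congr rfl fun s _ => h1 s]
  rw [← Finset.sum_subtype (Finset.powersetCard (n + 1) Finset.univ)
    (p := fun s => s ∈ Set.powersetCard (Fin (Module.finrank K P)) (n + 1))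
    (f := fun s => ∑ x ∈ s, b.repr (φ (b x)) x)
    (by intro s; simp [Finset.mem_powersetCard, Set.powersetCard.mem_iff])]
  rw [count_sum, Finset.card_fin, Finset.mul_sum]
  · rfl
end

section
/- Let p ⊆ V be a nondegenerate subspace of dimension k, let 1 ≤ m ≤ k, and let t₁, t₂ : V → V be tangent vectors at p, with t₁* the adjoint of t₁. If S : ⋀^m p → ⋀^m p is a linear map satisfying ⟨S α, β⟩ = ⟨D_{t₂} α, D_{t₁} β⟩ for all α, β ∈ ⋀^m p (pairings taken in the induced hermitian form on ⋀^m V, with ⋀^m p regarded as the subspace of ⋀^m V spanned by wedges of vectors of p), then the trace of S equals (k−1 choose m−1) times the trace of the endomorphism t₁*∘t₂ restricted to p. (This is the statement that the m-Plücker embedding is an hermitian embedding after rescaling the metric of Gr⁰(k,V) by the factor (k−1 choose m−1).) -/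
/-- `⋀^m p` regarded as the subspace of `⋀^m V` spanned by the wedges of vectors of `p`. -/
noncomputable def wedgeSpan (R : Type*) [CommRing R] {V : Type*} [AddCommGroup V] [Module R V]
    (p : Submodule R V) (m : ℕ) : Submodule R (⋀[R]^m V) :=
  Submodule.span R {x : ⋀[R]^m V | ∃ v : Fin m → V, (∀ i, v i ∈ p) ∧ x = wedge R m v}

open Module Set.powersetCard in
lemma aux_comb {𝕜 : Type*} [RCLike 𝕜] (k m : ℕ) (hm1 : 1 ≤ m) (hmk : m ≤ k) (f : Fin k → 𝕜) :
    ∑ s : Set.powersetCard (Fin k) m, ∑ i : Fin m, f (ofFinEmbEquiv.symm s i)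
      = ((k - 1).choose (m - 1) : 𝕜) * ∑ x, f x := by
  classical
  have h1 : ∀ s : Set.powersetCard (Fin k) m,
      ∑ i : Fin m, f (ofFinEmbEquiv.symm s i) = ∑ x, if x ∈ (s : Finset (Fin k)) then f x else 0 := by
    intro s
    rw [← Finset.sum_filter, Finset.filter_mem_eq_inter, Finset.univ_inter]
    have : (s : Finset (Fin k)) =
        Finset.univ.map (ofFinEmbEquiv.symm s).toEmbedding := by
      ext x
      have := mem_range_ofFinEmbEquiv_symm_iff_mem s x
      rw [mem_coe_iff, ← this]
      simp
    rw [this, Finset.sum_map]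
    simp
  simp_rw [h1]
  rw [Finset.sum_comm, Finset.mul_sum]
  refine Finset.sum_congr rfl fun x _ => ?_
  have h2 : ∑ s : Set.powersetCard (Fin k) m, (if x ∈ (s : Finset (Fin k)) then f x else 0)
      = ∑ s ∈ (Finset.univ : Finset (Fin k)).powersetCard m, (if x ∈ s then f x else 0) := by
    symm
    apply Finset.sum_subtype
    intro s
    simp [Set.powersetCard.mem_iff]
  rw [h2, ← Finset.sum_filter, Finset.sum_const, nsmul_eq_mul]
  congr 2
  have h3 := Finset.card_filter_powersetCard_subset {x} (Finset.univ : Finset (Fin k)) m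
    (by simp) (by simpa using hm1)
  simpa using h3

lemma aux_dual {𝕜 : Type*} [RCLike 𝕜] {V : Type*} [AddCommGroup V] [Module 𝕜 V]
    (φ : V →ₗ[𝕜] V →ₛₗ[starRingEnd 𝕜] 𝕜) (p : Submodule 𝕜 V)
    (hpnd : ∀ x ∈ p, (∀ y ∈ p, φ x y = 0) → x = 0)
    (k : ℕ) (b : Module.Basis (Fin k) 𝕜 p) :
    ∃ b' : Fin k → p, ∀ i j, φ (b i) (b' j) = if i = j then 1 else 0 := by
  classical
  let G : Matrix (Fin k) (Fin k) 𝕜 := Matrix.of fun i j => φ (b i) (b j)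
  have hG : G.det ≠ 0 := by
    intro h0
    obtain ⟨v, hv, hvG⟩ := Matrix.exists_vecMul_eq_zero_iff.mpr h0
    apply hv
    have hx : (∑ i, v i • b i : p) = 0 := by
      apply Subtype.ext
      apply hpnd _ (Subtype.mem _)
      intro y hy
      have hb : ∀ j, φ ((∑ i, v i • b i : p) : V) (b j) = 0 := by
        intro j
        have := congrFun hvG j
        simpa [Matrix.vecMul, dotProduct, G] using this
      have hy' : y = ∑ j, b.repr ⟨y, hy⟩ j • (b j : V) := by
        have := congrArg p.subtype (b.sum_repr ⟨y, hy⟩)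
        rw [map_sum] at this
        exact this.symm
      rw [hy', map_sum]
      refine Finset.sum_eq_zero fun j _ => ?_
      rw [LinearMap.map_smulₛₗ, hb, smul_zero]
    funext i
    exact Fintype.linearIndependent_iff.mp b.linearIndependent v hx i
  refine ⟨fun j => ∑ l, (starRingEnd 𝕜 (G⁻¹ l j)) • b l, fun i j => ?_⟩
  have h1 : (G * G⁻¹) i j = if i = j then 1 else 0 := by
    rw [Matrix.mul_nonsing_inv _ (isUnit_iff_ne_zero.mpr hG), Matrix.one_apply]
  rw [← h1, Matrix.mul_apply]
  simp only [Submodule.coe_sum, Submodule.coe_smul, map_sum, LinearMap.map_smulₛₗ,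
    RingHomCompTriple.comp_apply, smul_eq_mul, G, Matrix.of_apply]
  exact Finset.sum_congr rfl fun l _ => by simp [mul_comm]

lemma aux_basis {𝕜 : Type*} [Field 𝕜] {V : Type*} [AddCommGroup V] [Module 𝕜 V]
    (p : Submodule 𝕜 V) (k m : ℕ) (b : Module.Basis (Fin k) 𝕜 p) :
    ∃ B : Module.Basis (Set.powersetCard (Fin k) m) 𝕜 (wedgeSpan 𝕜 p m),
      ∀ s, (B s : ⋀[𝕜]^m V) =
        wedge 𝕜 m (fun i => (b (Set.powersetCard.ofFinEmbEquiv.symm s i) : V)) := by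
  have hr : LinearMap.range (exteriorPower.map m p.subtype) = wedgeSpan 𝕜 p m := by
    rw [LinearMap.range_eq_map, ← exteriorPower.ιMulti_span, Submodule.map_span, wedgeSpan]
    congr 1
    ext x
    constructor
    · rintro ⟨_, ⟨v, rfl⟩, rfl⟩
      refine ⟨fun i => v i, fun i => (v i).2, ?_⟩
      rw [exteriorPower.map_apply_ιMulti]
      rfl
    · rintro ⟨v, hv, rfl⟩
      refine ⟨_, ⟨fun i => ⟨v i, hv i⟩, rfl⟩, ?_⟩
      rw [exteriorPower.map_apply_ιMulti]
      rfl
  let e := (LinearEquiv.ofInjective (exteriorPower.map m p.subtype)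
    (exteriorPower.map_injective_field p.subtype_injective)).trans (LinearEquiv.ofEq _ _ hr)
  refine ⟨(b.exteriorPower m).map e, fun s => ?_⟩
  rw [Module.Basis.map_apply, exteriorPower.basis_apply]
  simp only [e, LinearEquiv.trans_apply, LinearEquiv.coe_ofEq_apply, LinearEquiv.ofInjective_apply]
  rw [exteriorPower.ιMulti_family, exteriorPower.map_apply_ιMulti]
  rfl

/-- the `m`-Plücker embedding is an hermitian embedding after rescaling the
metric by `(k−1).choose (m−1)`: if `p` is nondegenerate of dimension `k`, `1 ≤ m ≤ k`,
`t₁, t₂` are tangent vectors at `p` and `S : ⋀^m p → ⋀^m p` satisfies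
`⟨S α, β⟩ = ⟨D_{t₂} α, D_{t₁} β⟩` for all `α, β ∈ ⋀^m p`, then
`tr S = (k−1).choose (m−1) · tr (t₁* ∘ t₂ restricted to p)`. -/
theorem statement9 {𝕜 : Type*} [RCLike 𝕜] {V : Type*} [AddCommGroup V] [Module 𝕜 V]
    [FiniteDimensional 𝕜 V]
    (φ : V →ₗ[𝕜] V →ₛₗ[starRingEnd 𝕜] 𝕜)
    (hherm : ∀ x y : V, φ x y = starRingEnd 𝕜 (φ y x))
    (hnd : ∀ x : V, (∀ y : V, φ x y = 0) → x = 0)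
    (p : Submodule 𝕜 V)
    (hpnd : ∀ x ∈ p, (∀ y ∈ p, φ x y = 0) → x = 0)
    (k : ℕ) (hk : Module.finrank 𝕜 p = k)
    (m : ℕ) (hm1 : 1 ≤ m) (hmk : m ≤ k)
    (Φ : ⋀[𝕜]^m V →ₗ[𝕜] ⋀[𝕜]^m V →ₛₗ[starRingEnd 𝕜] 𝕜)
    (hΦ : ∀ v w : Fin m → V,
      Φ (wedge 𝕜 m v) (wedge 𝕜 m w) = (Matrix.of fun i j => φ (v i) (w j)).det)
    (t₁ t₂ t₁s : V →ₗ[𝕜] V)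
    -- `t₁` and `t₂` are tangent vectors at `p`: they map `p` into `p^⊥` and kill `p^⊥`
    (ht₁p : ∀ x ∈ p, ∀ y ∈ p, φ (t₁ x) y = 0)
    (ht₁perp : ∀ x : V, (∀ y ∈ p, φ x y = 0) → t₁ x = 0)
    (ht₂p : ∀ x ∈ p, ∀ y ∈ p, φ (t₂ x) y = 0)
    (ht₂perp : ∀ x : V, (∀ y ∈ p, φ x y = 0) → t₂ x = 0)
    (hadj₁ : ∀ v w : V, φ (t₁ v) w = φ v (t₁s w))
    (Dt₁ Dt₂ : ⋀[𝕜]^m V →ₗ[𝕜] ⋀[𝕜]^m V)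
    (hDt₁ : ∀ v : Fin m → V,
      Dt₁ (wedge 𝕜 m v) = ∑ i, wedge 𝕜 m (Function.update v i (t₁ (v i))))
    (hDt₂ : ∀ v : Fin m → V,
      Dt₂ (wedge 𝕜 m v) = ∑ i, wedge 𝕜 m (Function.update v i (t₂ (v i))))
    (S : wedgeSpan 𝕜 p m →ₗ[𝕜] wedgeSpan 𝕜 p m)
    (hS : ∀ α β : wedgeSpan 𝕜 p m,
      Φ (S α : ⋀[𝕜]^m V) (β : ⋀[𝕜]^m V) = Φ (Dt₂ (α : ⋀[𝕜]^m V)) (Dt₁ (β : ⋀[𝕜]^m V)))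
    -- `r` is the endomorphism of `p` obtained by restricting `t₁* ∘ t₂` to `p`
    (r : p →ₗ[𝕜] p) (hr : ∀ x : p, (r x : V) = t₁s (t₂ (x : V))) :
    LinearMap.trace 𝕜 (wedgeSpan 𝕜 p m) S =
      ((k - 1).choose (m - 1) : 𝕜) * LinearMap.trace 𝕜 p r := by
  classical
  let b : Module.Basis (Fin k) 𝕜 p := Module.finBasisOfFinrankEq 𝕜 p hk
  obtain ⟨b', hb'⟩ := aux_dual φ p hpnd k b
  obtain ⟨B, hB⟩ := aux_basis p k m b
  let w : Set.powersetCard (Fin k) m → Fin m → V :=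
    fun s i => (b' (Set.powersetCard.ofFinEmbEquiv.symm s i) : V)
  have hw : ∀ s, wedge 𝕜 m (w s) ∈ wedgeSpan 𝕜 p m := fun s =>
    Submodule.subset_span ⟨w s, fun i => Subtype.mem _, rfl⟩
  -- coordinates in `p` are pairings with the dual basis
  have hcoord : ∀ (x : p) j, b.repr x j = φ x (b' j) := by
    intro x j
    conv_rhs => rw [← b.sum_repr x]
    simp [-Module.Basis.sum_repr, hb']
  have hcoordB : ∀ (x : wedgeSpan 𝕜 p m) s,
      B.repr x s = Φ (x : ⋀[𝕜]^m V) (wedge 𝕜 m (w s)) := by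
    intro x s
    have hBB : ∀ t, Φ (B t : ⋀[𝕜]^m V) (wedge 𝕜 m (w s)) = if t = s then 1 else 0 := by
      intro t
      have h1 := exteriorPower.basis_repr_apply 𝕜 m b (b.exteriorPower m t) s
      rw [Module.Basis.repr_self, exteriorPower.basis_apply, exteriorPower.ιMulti_family,
        exteriorPower.ιMultiDual_apply_ιMulti, Finsupp.single_apply] at h1
      rw [h1, hB, hΦ]
      congr 1
      ext i j
      simp only [Matrix.of_apply, w, hb', Module.Basis.coord_apply, Function.comp_apply,
        Module.Basis.repr_self, Finsupp.single_apply]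
    conv_rhs => rw [← B.sum_repr x]
    simp [-Module.Basis.sum_repr, hBB]
  have hrr : ∀ x y : p, φ (t₂ x) (t₁ y) = φ (r x) y := by
    intro x y
    rw [hherm, hadj₁, ← hr, ← hherm]
  rw [LinearMap.trace_eq_matrix_trace 𝕜 B, LinearMap.trace_eq_matrix_trace 𝕜 b,
    Matrix.trace, Matrix.trace]
  simp only [Matrix.diag_apply, LinearMap.toMatrix_apply]
  rw [← aux_comb k m hm1 hmk]
  refine Finset.sum_congr rfl fun s _ => ?_
  have hS' := hS (B s) ⟨_, hw s⟩
  rw [hcoordB]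
  simp only at hS'
  rw [hS', hB, hDt₁, hDt₂]
  simp only [map_sum, LinearMap.sum_apply, hΦ]
  refine Finset.sum_congr rfl fun i _ => ?_
  set σ := Set.powersetCard.ofFinEmbEquiv.symm s with hσ
  have hbw : ∀ a c, φ (b (σ a)) (w s c) = if a = c then 1 else 0 := by
    intro a c
    simp [w, hb', ← hσ]
  have hperp : ∀ x y : p, φ (x : V) (t₁ y) = 0 := by
    intro x y
    rw [hherm, ht₁p _ y.2 _ x.2, map_zero]
  have hperp2 : ∀ x y : p, φ (t₂ x) (y : V) = 0 := fun x y => ht₂p _ x.2 _ y.2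
  -- `i` is the modified slot for `t₁`
  rw [Finset.sum_eq_single i]
  · rw [hcoord, ← hrr]
    have hdiag : (Matrix.of fun a c => φ
        (Function.update (fun i => (b (σ i) : V)) i (t₂ (b (σ i))) a)
        (Function.update (w s) i (t₁ (w s i)) c)) =
        Matrix.diagonal (Function.update (fun _ => (1 : 𝕜)) i
          (φ (t₂ (b (σ i))) (t₁ (b' (σ i))))) := by
      ext a c
      rw [Matrix.of_apply, Matrix.diagonal_apply]
      by_cases ha : a = i
      · subst ha
        by_cases hc : a = c
        · subst hc
          simp [w, ← hσ]
        · simp [hc, Function.update_of_ne (Ne.symm hc), w, hperp2]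
      · by_cases hc : c = i
        · subst hc
          simp [ha, w, hperp]
        · simp [ha, hc, hbw]
    rw [hdiag, Matrix.det_diagonal, Finset.prod_update_of_mem (Finset.mem_univ i)]
    simp
  · intro j _ hji
    apply Matrix.det_eq_zero_of_row_eq_zero i
    intro c
    rw [Matrix.of_apply, Function.update_of_ne (Ne.symm hji)]
    by_cases hc : c = i
    · subst hc
      simp [w, hperp]
    · rw [Function.update_of_ne hc, hbw, if_neg (Ne.symm hc)]
  · simp
end

section
/- Let p ⊆ V be a nondegenerate subspace and let t₁, t₂ : V → V be tangent vectors at p, with t₁* the adjoint of t₁. Then for all p₁,…,p_m, p'₁,…,p'_m ∈ p one has ⟨D_{t₂}(p₁∧⋯∧p_m), D_{t₁}(p'₁∧⋯∧p'_m)⟩ = ⟨D_{t₁*∘t₂}(p₁∧⋯∧p_m), p'₁∧⋯∧p'_m⟩, the pairings taken in the induced hermitian form on ⋀^m V. (In the notation of the paper: (E^m t₁)* ∘ E^m t₂ = E^m(t₁* t₂) on ⋀^m p.) -/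
/-- If row `i` vanishes off column `j`, the other entries of column `j` do not affect `det`. -/
theorem det_eq_of_row_single {R : Type*} [CommRing R] {n : Type*} [Fintype n] [DecidableEq n]
    (M N : Matrix n n R) (i j : n) (h : ∀ k l, (l ≠ j ∨ k = i) → M k l = N k l)
    (hN : ∀ l, l ≠ j → N i l = 0) : M.det = N.det := by
  rw [Matrix.det_apply', Matrix.det_apply']
  refine Finset.sum_congr rfl fun σ _ => ?_
  congr 1
  by_cases hσ : σ j = i
  · refine Finset.prod_congr rfl fun k _ => h _ _ ?_
    by_cases hk : k = j
    · right; rw [hk, hσ]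
    · left; exact hk
  · have hne : σ.symm i ≠ j := fun e => hσ (by rw [← e]; simp)
    rw [Finset.prod_eq_zero (Finset.mem_univ (σ.symm i)),
      Finset.prod_eq_zero (Finset.mem_univ (σ.symm i))]
    · simpa using hN _ hne
    · simpa [h i _ (Or.inr rfl)] using hN _ hne

theorem det_updateRow_eq_sum {R : Type*} [CommRing R] {n : Type*} [Fintype n] [DecidableEq n]
    (A : Matrix n n R) (i : n) (b : n → R) :
    (A.updateRow i b).det = ∑ j, (A.updateRow i (Pi.single j (b j))).det := by
  have := (Matrix.detRowAlternating (R := R) (n := n)).toMultilinearMap.map_update_sum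
    Finset.univ i (fun j => Pi.single j (b j)) A
  rw [Finset.univ_sum_single] at this
  exact this

/-- for tangent vectors `t₁, t₂` at a nondegenerate subspace `p` and all
`p₁,…,p_m, p'₁,…,p'_m ∈ p`, one has
`⟨D_{t₂}(p₁∧⋯∧p_m), D_{t₁}(p'₁∧⋯∧p'_m)⟩ = ⟨D_{t₁*∘t₂}(p₁∧⋯∧p_m), p'₁∧⋯∧p'_m⟩`
(in the paper's notation: `(E^m t₁)* ∘ E^m t₂ = E^m (t₁* t₂)` on `⋀^m p`). -/
theorem statement10 {𝕜 : Type*} [RCLike 𝕜] {V : Type*} [AddCommGroup V] [Module 𝕜 V]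
    [FiniteDimensional 𝕜 V]
    (φ : V →ₗ[𝕜] V →ₛₗ[starRingEnd 𝕜] 𝕜)
    (hherm : ∀ x y : V, φ x y = starRingEnd 𝕜 (φ y x))
    (hnd : ∀ x : V, (∀ y : V, φ x y = 0) → x = 0)
    (p : Submodule 𝕜 V)
    (hpnd : ∀ x ∈ p, (∀ y ∈ p, φ x y = 0) → x = 0)
    (m : ℕ)
    (Φ : ⋀[𝕜]^m V →ₗ[𝕜] ⋀[𝕜]^m V →ₛₗ[starRingEnd 𝕜] 𝕜)
    (hΦ : ∀ v w : Fin m → V,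
      Φ (wedge 𝕜 m v) (wedge 𝕜 m w) = (Matrix.of fun i j => φ (v i) (w j)).det)
    (t₁ t₂ t₁s : V →ₗ[𝕜] V)
    -- `t₁` and `t₂` are tangent vectors at `p`: they map `p` into `p^⊥` and kill `p^⊥`
    (ht₁p : ∀ x ∈ p, ∀ y ∈ p, φ (t₁ x) y = 0)
    (ht₁perp : ∀ x : V, (∀ y ∈ p, φ x y = 0) → t₁ x = 0)
    (ht₂p : ∀ x ∈ p, ∀ y ∈ p, φ (t₂ x) y = 0)
    (ht₂perp : ∀ x : V, (∀ y ∈ p, φ x y = 0) → t₂ x = 0)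
    (hadj₁ : ∀ v w : V, φ (t₁ v) w = φ v (t₁s w))
    (Dt₁ Dt₂ D₁₂ : ⋀[𝕜]^m V →ₗ[𝕜] ⋀[𝕜]^m V)
    (hDt₁ : ∀ v : Fin m → V,
      Dt₁ (wedge 𝕜 m v) = ∑ i, wedge 𝕜 m (Function.update v i (t₁ (v i))))
    (hDt₂ : ∀ v : Fin m → V,
      Dt₂ (wedge 𝕜 m v) = ∑ i, wedge 𝕜 m (Function.update v i (t₂ (v i))))
    (hD₁₂ : ∀ v : Fin m → V,
      D₁₂ (wedge 𝕜 m v) = ∑ i, wedge 𝕜 m (Function.update v i (t₁s (t₂ (v i))))) :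
    ∀ pv pv' : Fin m → V, (∀ i, pv i ∈ p) → (∀ i, pv' i ∈ p) →
      Φ (Dt₂ (wedge 𝕜 m pv)) (Dt₁ (wedge 𝕜 m pv')) =
        Φ (D₁₂ (wedge 𝕜 m pv)) (wedge 𝕜 m pv') := by
  intro pv pv' hp hp'
  have hc : ∀ x y, φ (t₁s x) y = φ x (t₁ y) := by
    intro x y
    rw [hherm, ← hadj₁, ← hherm]
  rw [hDt₂, hDt₁, hD₁₂]
  simp only [map_sum, LinearMap.sum_apply, hΦ]
  rw [Finset.sum_comm]
  refine Finset.sum_congr rfl fun i _ => ?_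
  have e : (Matrix.of fun k l => φ (Function.update pv i (t₁s (t₂ (pv i))) k) (pv' l)) =
      (Matrix.of fun k l => φ (pv k) (pv' l)).updateRow i
        (fun l => φ (t₂ (pv i)) (t₁ (pv' l))) := by
    ext k l
    by_cases hk : k = i
    · subst hk; simp [hc]
    · simp [hk]
  rw [e, det_updateRow_eq_sum]
  refine Finset.sum_congr rfl fun j _ => ?_
  apply det_eq_of_row_single _ _ i j
  · intro k l hkl
    by_cases hk : k = i
    · subst hk
      by_cases hl : l = j
      · subst hl; simp
      · simp [hl, ht₂p _ (hp k) _ (hp' l)]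
    · have hl : l ≠ j := hkl.resolve_right hk
      simp [hk, hl]
  · intro l hl
    simp [hl]
end

section
/- Let p ⊆ V be a nondegenerate subspace and let t, t₁, t₂ : V → V be tangent vectors at p, with t₁* the adjoint of t₁. Then for all p₁,…,p_m ∈ p one has D_t(D_{t₁*}(D_{t₂}(p₁∧⋯∧p_m))) = D_{t∘t₁*∘t₂}(p₁∧⋯∧p_m) + B(t, t₁*∘t₂)(p₁∧⋯∧p_m) in ⋀^m V. (In the paper's notation: E^m t (E^m t₁)* E^m t₂ − E^m(t t₁* t₂) = B(t, t₁* t₂) on ⋀^m p; this identity yields the Gauss equation computing the curvature tensor of Gr⁰(k,V).) -/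
theorem wedge_update_zero {R : Type*} [CommRing R] {V : Type*} [AddCommGroup V] [Module R V]
    (m : ℕ) (v : Fin m → V) (i : Fin m) : wedge R m (Function.update v i 0) = 0 := by
  apply Subtype.ext
  change ExteriorAlgebra.ιMulti R m (Function.update v i 0) = 0
  exact (ExteriorAlgebra.ιMulti R m).map_update_zero v i

/-- for tangent vectors `t, t₁, t₂` at a nondegenerate subspace `p` and all
`p₁,…,p_m ∈ p`, one has
`D_t(D_{t₁*}(D_{t₂}(p₁∧⋯∧p_m))) = D_{t∘t₁*∘t₂}(p₁∧⋯∧p_m) + B(t, t₁*∘t₂)(p₁∧⋯∧p_m)`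
(in the paper's notation: `E^m t (E^m t₁)* E^m t₂ − E^m(t t₁* t₂) = B(t, t₁* t₂)` on
`⋀^m p`). -/
theorem statement11 {𝕜 : Type*} [RCLike 𝕜] {V : Type*} [AddCommGroup V] [Module 𝕜 V]
    [FiniteDimensional 𝕜 V]
    (φ : V →ₗ[𝕜] V →ₛₗ[starRingEnd 𝕜] 𝕜)
    (hherm : ∀ x y : V, φ x y = starRingEnd 𝕜 (φ y x))
    (hnd : ∀ x : V, (∀ y : V, φ x y = 0) → x = 0)
    (p : Submodule 𝕜 V)
    (hpnd : ∀ x ∈ p, (∀ y ∈ p, φ x y = 0) → x = 0)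
    (m : ℕ)
    (t t₁ t₂ t₁s : V →ₗ[𝕜] V)
    -- `t`, `t₁` and `t₂` are tangent vectors at `p`: they map `p` into `p^⊥` and kill `p^⊥`
    (htp : ∀ x ∈ p, ∀ y ∈ p, φ (t x) y = 0)
    (htperp : ∀ x : V, (∀ y ∈ p, φ x y = 0) → t x = 0)
    (ht₁p : ∀ x ∈ p, ∀ y ∈ p, φ (t₁ x) y = 0)
    (ht₁perp : ∀ x : V, (∀ y ∈ p, φ x y = 0) → t₁ x = 0)
    (ht₂p : ∀ x ∈ p, ∀ y ∈ p, φ (t₂ x) y = 0)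
    (ht₂perp : ∀ x : V, (∀ y ∈ p, φ x y = 0) → t₂ x = 0)
    (hadj₁ : ∀ v w : V, φ (t₁ v) w = φ v (t₁s w))
    (Dt Dt₁s Dt₂ Dcomp Bmap : ⋀[𝕜]^m V →ₗ[𝕜] ⋀[𝕜]^m V)
    (hDt : ∀ v : Fin m → V,
      Dt (wedge 𝕜 m v) = ∑ i, wedge 𝕜 m (Function.update v i (t (v i))))
    (hDt₁s : ∀ v : Fin m → V,
      Dt₁s (wedge 𝕜 m v) = ∑ i, wedge 𝕜 m (Function.update v i (t₁s (v i))))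
    (hDt₂ : ∀ v : Fin m → V,
      Dt₂ (wedge 𝕜 m v) = ∑ i, wedge 𝕜 m (Function.update v i (t₂ (v i))))
    (hDcomp : ∀ v : Fin m → V,
      Dcomp (wedge 𝕜 m v) = ∑ i, wedge 𝕜 m (Function.update v i (t (t₁s (t₂ (v i))))))
    (hBmap : ∀ v : Fin m → V,
      Bmap (wedge 𝕜 m v) = ∑ i, ∑ j, if i = j then 0 else
        wedge 𝕜 m (Function.update (Function.update v i (t (v i))) j (t₁s (t₂ (v j))))) :
    ∀ pv : Fin m → V, (∀ i, pv i ∈ p) →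
      Dt (Dt₁s (Dt₂ (wedge 𝕜 m pv))) = Dcomp (wedge 𝕜 m pv) + Bmap (wedge 𝕜 m pv) := by
  intro pv hpv
  -- orthogonal decomposition along `p`
  have hdec : ∀ v : V, ∃ a ∈ p, ∀ y ∈ p, φ (v - a) y = 0 := by
    intro v
    let b := Module.finBasis 𝕜 p
    let T : p →ₗ[𝕜] (Fin (Module.finrank 𝕜 p) → 𝕜) :=
      { toFun := fun x i => φ (x : V) (b i : V)
        map_add' := by intro x y; ext i; simp
        map_smul' := by intro c x; ext i; simp }
    have hspan : ∀ x : V, (∀ i, φ x (b i : V) = 0) → ∀ y ∈ p, φ x y = 0 := by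
      intro x hx y hy
      have h := b.sum_repr ⟨y, hy⟩
      have h2 : y = ∑ i, (b.repr ⟨y, hy⟩ i) • (b i : V) := by
        have h3 := congrArg p.subtype h
        rw [map_sum] at h3
        exact h3.symm
      rw [h2, map_sum]
      apply Finset.sum_eq_zero
      intro i _
      rw [LinearMap.map_smulₛₗ, hx, smul_zero]
    have hinj : Function.Injective T := by
      rw [injective_iff_map_eq_zero]
      intro x hx
      apply Subtype.ext
      exact hpnd x x.2 (hspan x (fun i => congrFun hx i))
    have hsurj : Function.Surjective T :=
      (LinearMap.injective_iff_surjective_of_finrank_eq_finrank (by simp)).1 hinj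
    obtain ⟨a, ha⟩ := hsurj (fun i => φ v (b i : V))
    refine ⟨a, a.2, hspan _ (fun i => ?_)⟩
    have : φ (a : V) (b i : V) = φ v (b i : V) := congrFun ha i
    rw [map_sub, LinearMap.sub_apply, this, sub_self]
  -- the adjoint kills `p`
  have hs : ∀ w ∈ p, t₁s w = 0 := by
    intro w hw
    apply hnd
    intro v
    rw [hherm, ← hadj₁]
    obtain ⟨a, ha, hva⟩ := hdec v
    have h : t₁ v = t₁ a := by
      have := ht₁perp _ hva
      rwa [map_sub, sub_eq_zero] at this
    rw [h, ht₁p a ha w hw, map_zero]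
  have h1 : Dt₁s (Dt₂ (wedge 𝕜 m pv)) =
      ∑ i, wedge 𝕜 m (Function.update pv i (t₁s (t₂ (pv i)))) := by
    rw [hDt₂, map_sum]
    refine Finset.sum_congr rfl fun i _ => ?_
    rw [hDt₁s, Finset.sum_eq_single i]
    · simp
    · intro j _ hj
      rw [Function.update_of_ne hj, hs _ (hpv j), wedge_update_zero]
    · simp
  rw [h1, map_sum, hDcomp, hBmap, Finset.sum_comm, ← Finset.sum_add_distrib]
  refine Finset.sum_congr rfl fun i _ => ?_
  rw [hDt, ← Finset.add_sum_erase _ _ (Finset.mem_univ i),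
    ← Finset.add_sum_erase _ (fun x => if x = i then _ else _) (Finset.mem_univ i)]
  simp only [Function.update_self, Function.update_idem, if_true, zero_add]
  congr 1
  refine Finset.sum_congr rfl fun j hj => ?_
  have hji := Finset.ne_of_mem_erase hj
  rw [if_neg hji, Function.update_of_ne hji, Function.update_comm hji]
end

section
/- Let p ⊆ V be a nondegenerate subspace and let t₁, w, t₂, t : V → V be tangent vectors at p, with t₁*, w* the adjoints of t₁, w. Then for all p₁,…,p_m ∈ p one has B(t₁*, w*)(B(t₂, t)(p₁∧⋯∧p_m)) = B(t₁*∘t₂, w*∘t)(p₁∧⋯∧p_m) + B(w*∘t₂, t₁*∘t)(p₁∧⋯∧p_m) in ⋀^m V. (In the paper's notation: (B(t₁,w))* B(t₂,t) = B(t₁*t₂, w*t) + B(w*t₂, t₁*t) on ⋀^m p.) -/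
theorem wedge_coord_zero (R : Type*) [CommRing R] {V : Type*} [AddCommGroup V] [Module R V]
    (m : ℕ) (v : Fin m → V) (i : Fin m) (h : v i = 0) : wedge R m v = 0 := by
  apply Subtype.ext
  exact (ExteriorAlgebra.ιMulti R m).map_coord_zero i h

/-- Orthogonal projection onto a nondegenerate subspace exists. -/
theorem exists_proj {𝕜 : Type*} [RCLike 𝕜] {V : Type*} [AddCommGroup V] [Module 𝕜 V]
    [FiniteDimensional 𝕜 V]
    (φ : V →ₗ[𝕜] V →ₛₗ[starRingEnd 𝕜] 𝕜) (p : Submodule 𝕜 V)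
    (hpnd : ∀ x ∈ p, (∀ y ∈ p, φ x y = 0) → x = 0) (v : V) :
    ∃ q ∈ p, ∀ y ∈ p, φ (v - q) y = 0 := by
  let b := Module.finBasis 𝕜 p
  have key : ∀ x : V, (∀ i, φ x (b i) = 0) → ∀ y ∈ p, φ x y = 0 := by
    intro x hx y hy
    have h : (φ x).comp p.subtype = 0 := b.ext (fun i => by simpa using hx i)
    have := LinearMap.congr_fun h ⟨y, hy⟩
    simpa using this
  let T : p →ₗ[𝕜] (Fin (Module.finrank 𝕜 p) → 𝕜) :=
    { toFun := fun x i => φ x (b i)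
      map_add' := by intro x y; ext i; simp
      map_smul' := by intro c x; ext i; simp }
  have hinj : Function.Injective T := by
    rw [injective_iff_map_eq_zero]
    intro x hx
    apply Subtype.ext
    exact hpnd x x.2 (key x (fun i => congrFun hx i))
  have hsurj : Function.Surjective T :=
    (LinearMap.injective_iff_surjective_of_finrank_eq_finrank (by simp)).1 hinj
  obtain ⟨q, hq⟩ := hsurj (fun i => φ v (b i))
  refine ⟨q, q.2, key _ (fun i => ?_)⟩
  have h1 : φ q (b i) = φ v (b i) := congrFun hq i
  simp [h1]

/-- The adjoint of a tangent vector at `p` kills `p`. -/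
theorem adjoint_kills {𝕜 : Type*} [RCLike 𝕜] {V : Type*} [AddCommGroup V] [Module 𝕜 V]
    [FiniteDimensional 𝕜 V]
    (φ : V →ₗ[𝕜] V →ₛₗ[starRingEnd 𝕜] 𝕜)
    (hherm : ∀ x y : V, φ x y = starRingEnd 𝕜 (φ y x))
    (hnd : ∀ x : V, (∀ y : V, φ x y = 0) → x = 0)
    (p : Submodule 𝕜 V)
    (hpnd : ∀ x ∈ p, (∀ y ∈ p, φ x y = 0) → x = 0)
    (t ts : V →ₗ[𝕜] V)
    (htp : ∀ x ∈ p, ∀ y ∈ p, φ (t x) y = 0)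
    (htperp : ∀ x : V, (∀ y ∈ p, φ x y = 0) → t x = 0)
    (hadj : ∀ v u : V, φ (t v) u = φ v (ts u)) (x : V) (hx : x ∈ p) : ts x = 0 := by
  apply hnd
  intro v
  rw [hherm, ← hadj]
  obtain ⟨q, hq, h⟩ := exists_proj φ p hpnd v
  have h1 := htperp _ h
  rw [map_sub, sub_eq_zero] at h1
  rw [h1, htp q hq x hx, map_zero]

/-- for tangent vectors `t₁, w, t₂, t` at a nondegenerate subspace `p` and all
`p₁,…,p_m ∈ p`, one has
`B(t₁*, w*)(B(t₂, t)(p₁∧⋯∧p_m)) = B(t₁*∘t₂, w*∘t)(p₁∧⋯∧p_m) + B(w*∘t₂, t₁*∘t)(p₁∧⋯∧p_m)`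
(in the paper's notation: `(B(t₁,w))* B(t₂,t) = B(t₁*t₂, w*t) + B(w*t₂, t₁*t)` on `⋀^m p`). -/
theorem statement12 {𝕜 : Type*} [RCLike 𝕜] {V : Type*} [AddCommGroup V] [Module 𝕜 V]
    [FiniteDimensional 𝕜 V]
    (φ : V →ₗ[𝕜] V →ₛₗ[starRingEnd 𝕜] 𝕜)
    (hherm : ∀ x y : V, φ x y = starRingEnd 𝕜 (φ y x))
    (hnd : ∀ x : V, (∀ y : V, φ x y = 0) → x = 0)
    (p : Submodule 𝕜 V)
    (hpnd : ∀ x ∈ p, (∀ y ∈ p, φ x y = 0) → x = 0)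
    (m : ℕ)
    (t₁ w t₂ t t₁s ws : V →ₗ[𝕜] V)
    -- `t₁`, `w`, `t₂`, `t` are tangent vectors at `p`: they map `p` into `p^⊥`, kill `p^⊥`
    (ht₁p : ∀ x ∈ p, ∀ y ∈ p, φ (t₁ x) y = 0)
    (ht₁perp : ∀ x : V, (∀ y ∈ p, φ x y = 0) → t₁ x = 0)
    (hwp : ∀ x ∈ p, ∀ y ∈ p, φ (w x) y = 0)
    (hwperp : ∀ x : V, (∀ y ∈ p, φ x y = 0) → w x = 0)
    (ht₂p : ∀ x ∈ p, ∀ y ∈ p, φ (t₂ x) y = 0)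
    (ht₂perp : ∀ x : V, (∀ y ∈ p, φ x y = 0) → t₂ x = 0)
    (htp : ∀ x ∈ p, ∀ y ∈ p, φ (t x) y = 0)
    (htperp : ∀ x : V, (∀ y ∈ p, φ x y = 0) → t x = 0)
    (hadj₁ : ∀ v u : V, φ (t₁ v) u = φ v (t₁s u))
    (hadjw : ∀ v u : V, φ (w v) u = φ v (ws u))
    (B₁ B₂ B₃ B₄ : ⋀[𝕜]^m V →ₗ[𝕜] ⋀[𝕜]^m V)
    -- `B₁ = B(t₁*, w*)`
    (hB₁ : ∀ v : Fin m → V,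
      B₁ (wedge 𝕜 m v) = ∑ i, ∑ j, if i = j then 0 else
        wedge 𝕜 m (Function.update (Function.update v i (t₁s (v i))) j (ws (v j))))
    -- `B₂ = B(t₂, t)`
    (hB₂ : ∀ v : Fin m → V,
      B₂ (wedge 𝕜 m v) = ∑ i, ∑ j, if i = j then 0 else
        wedge 𝕜 m (Function.update (Function.update v i (t₂ (v i))) j (t (v j))))
    -- `B₃ = B(t₁*∘t₂, w*∘t)`
    (hB₃ : ∀ v : Fin m → V,
      B₃ (wedge 𝕜 m v) = ∑ i, ∑ j, if i = j then 0 else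
        wedge 𝕜 m (Function.update (Function.update v i (t₁s (t₂ (v i)))) j (ws (t (v j)))))
    -- `B₄ = B(w*∘t₂, t₁*∘t)`
    (hB₄ : ∀ v : Fin m → V,
      B₄ (wedge 𝕜 m v) = ∑ i, ∑ j, if i = j then 0 else
        wedge 𝕜 m (Function.update (Function.update v i (ws (t₂ (v i)))) j (t₁s (t (v j))))) :
    ∀ pv : Fin m → V, (∀ i, pv i ∈ p) →
      B₁ (B₂ (wedge 𝕜 m pv)) = B₃ (wedge 𝕜 m pv) + B₄ (wedge 𝕜 m pv) := by
  intro pv hpv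
  have k₁ := adjoint_kills φ hherm hnd p hpnd t₁ t₁s ht₁p ht₁perp hadj₁
  have k₂ := adjoint_kills φ hherm hnd p hpnd w ws hwp hwperp hadjw
  rw [hB₂, hB₃, hB₄, map_sum, ← Finset.sum_add_distrib]
  refine Finset.sum_congr rfl fun i _ => ?_
  rw [map_sum, ← Finset.sum_add_distrib]
  refine Finset.sum_congr rfl fun j _ => ?_
  by_cases hij : i = j
  · simp [hij]
  simp only [if_neg hij]
  rw [hB₁]
  set v' := Function.update (Function.update pv i (t₂ (pv i))) j (t (pv j)) with hv'
  have hvi : v' i = t₂ (pv i) := by simp [hv', hij]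
  have hvj : v' j = t (pv j) := by simp [hv']
  have hvk : ∀ k, k ≠ i → k ≠ j → v' k = pv k := by
    intro k h1 h2
    simp [hv', h1, h2]
  have hz1 : ∀ k l, k ≠ i → k ≠ j → (if k = l then 0 else
      wedge 𝕜 m (Function.update (Function.update v' k (t₁s (v' k))) l (ws (v' l)))) = 0 := by
    intro k l h1 h2
    split_ifs with h
    · rfl
    · apply wedge_coord_zero 𝕜 m _ k
      rw [Function.update_of_ne h, Function.update_self, hvk k h1 h2, k₁ _ (hpv k)]
  have hz2 : ∀ k l, l ≠ i → l ≠ j → (if k = l then 0 else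
      wedge 𝕜 m (Function.update (Function.update v' k (t₁s (v' k))) l (ws (v' l)))) = 0 := by
    intro k l h1 h2
    split_ifs with h
    · rfl
    · apply wedge_coord_zero 𝕜 m _ l
      rw [Function.update_self, hvk l h1 h2, k₂ _ (hpv l)]
  rw [Fintype.sum_eq_add i j hij
    (fun k hk => Finset.sum_eq_zero fun l _ => hz1 k l hk.1 hk.2)]
  rw [Fintype.sum_eq_single j (fun l hl => ?_), Fintype.sum_eq_single i (fun l hl => ?_)]
  · rw [if_neg hij, if_neg (Ne.symm hij), hvi, hvj]
    congr 2
    · ext k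
      by_cases h2 : k = j
      · subst h2; simp
      by_cases h1 : k = i
      · subst h1; simp [h2]
      simp [h1, h2, hv']
    · ext k
      by_cases h2 : k = j
      · subst h2; simp [Ne.symm hij]
      by_cases h1 : k = i
      · subst h1; simp [h2]
      simp [h1, h2, hv']
  · by_cases h : l = j
    · simp [h]
    · exact hz2 j l hl h
  · by_cases h : l = i
    · simp [h]
    · exact hz2 i l h hl
end

section
/- Let p ⊆ V be a nondegenerate subspace and let w, t, t₁, t₂ : V → V be tangent vectors at p, with t₁* the adjoint of t₁. Then for all p₁,…,p_m, p'₁,…,p'_m ∈ p one has ⟨B(t, t₁*∘t₂)(p₁∧⋯∧p_m) + B(t₂, t₁*∘t)(p₁∧⋯∧p_m), D_w(p'₁∧⋯∧p'_m)⟩ = ⟨B(t₂, t)(p₁∧⋯∧p_m), B(t₁, w)(p'₁∧⋯∧p'_m)⟩, pairings taken in the induced hermitian form on ⋀^m V. (This is the simplified form of the Gauss equation for the m-Plücker embedding: (E^m w)* B(t, t₁*t₂) + (E^m w)* B(t₂, t₁*t) = (B(t₁,w))* B(t₂,t).) -/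
/-- Signed sum over permutations with two marked columns. -/
noncomputable def pluckerSum {R : Type*} [CommRing R] {m : ℕ} (G A C : Fin m → Fin m → R) : R :=
  ∑ σ : Equiv.Perm (Fin m), ∑ k, ∑ l, if k = l then 0 else
    ((Equiv.Perm.sign σ : ℤ) : R) *
      ∏ x, if x = k then A (σ x) x else if x = l then C (σ x) x else G (σ x) x

theorem gauss_lhs {R V : Type*} [CommRing R] {m : ℕ} (φ : V → V → R)
    (pv pv' : Fin m → V) (t s w : V → V)
    (ht : ∀ i j, φ (t (pv i)) (pv' j) = 0) :
    (∑ k, ∑ i, ∑ j, if i = j then 0 else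
      (Matrix.of fun a b => φ (Function.update (Function.update pv i (t (pv i))) j (s (pv j)) a)
        (Function.update pv' k (w (pv' k)) b)).det) =
    pluckerSum (fun a b => φ (pv a) (pv' b)) (fun a b => φ (t (pv a)) (w (pv' b)))
      (fun a b => φ (s (pv a)) (pv' b)) := by
  have h1 : ∀ k i j : Fin m, (if i = j then (0 : R) else
      (Matrix.of fun a b => φ (Function.update (Function.update pv i (t (pv i))) j (s (pv j)) a)
        (Function.update pv' k (w (pv' k)) b)).det) =
      ∑ σ : Equiv.Perm (Fin m), if i = j then (0 : R) else ((Equiv.Perm.sign σ : ℤ) : R) *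
        ∏ x, φ (Function.update (Function.update pv i (t (pv i))) j (s (pv j)) (σ x))
        (Function.update pv' k (w (pv' k)) x) := by
    intro k i j
    split_ifs
    · simp
    · rw [Matrix.det_apply']; rfl
  simp only [h1]
  have h2 : ∀ f : Fin m → Fin m → Fin m → Equiv.Perm (Fin m) → R,
      ∑ k, ∑ i, ∑ j, ∑ σ, f k i j σ = ∑ σ, ∑ k, ∑ i, ∑ j, f k i j σ := by
    intro f
    simp only [Finset.sum_comm (t := (Finset.univ : Finset (Equiv.Perm (Fin m))))]
  rw [h2, pluckerSum]
  refine Finset.sum_congr rfl fun σ _ => Finset.sum_congr rfl fun k _ => ?_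
  rw [Finset.sum_eq_single (σ k)]
  · rw [← Equiv.sum_comp σ]
    refine Finset.sum_congr rfl fun l _ => ?_
    by_cases hkl : k = l
    · simp [hkl]
    rw [if_neg (by simpa using hkl), if_neg hkl]
    congr 1
    refine Finset.prod_congr rfl fun x _ => ?_
    simp only [Function.update_apply, EmbeddingLike.apply_eq_iff_eq]
    by_cases hx : x = k
    · subst hx; simp [hkl]
    · by_cases hl : x = l
      · subst hl; simp [hx]
      · simp [hx, hl]
  · intro i _ hi
    refine Finset.sum_eq_zero fun j _ => ?_
    by_cases hij : i = j
    · simp [hij]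
    rw [if_neg hij, Finset.prod_eq_zero (Finset.mem_univ (σ.symm i)), mul_zero]
    have : σ.symm i ≠ k := by
      intro h; apply hi; rw [← h]; simp
    simp [Function.update_apply, hij, this, ht]
  · simp

theorem gauss_rhs {R V : Type*} [CommRing R] {m : ℕ} (φ : V → V → R)
    (pv pv' : Fin m → V) (t t₂ t₁ w : V → V)
    (ht : ∀ i j, φ (t (pv i)) (pv' j) = 0) (ht₂ : ∀ i j, φ (t₂ (pv i)) (pv' j) = 0) :
    (∑ k, ∑ l, ∑ i, ∑ j, if k = l then 0 else if i = j then 0 else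
      (Matrix.of fun a b => φ (Function.update (Function.update pv i (t₂ (pv i))) j (t (pv j)) a)
        (Function.update (Function.update pv' k (t₁ (pv' k))) l (w (pv' l)) b)).det) =
    pluckerSum (fun a b => φ (pv a) (pv' b)) (fun a b => φ (t (pv a)) (w (pv' b)))
      (fun a b => φ (t₂ (pv a)) (t₁ (pv' b))) +
    pluckerSum (fun a b => φ (pv a) (pv' b)) (fun a b => φ (t₂ (pv a)) (w (pv' b)))
      (fun a b => φ (t (pv a)) (t₁ (pv' b))) := by
  have h1 : ∀ k l i j : Fin m, (if k = l then 0 else if i = j then (0 : R) else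
      (Matrix.of fun a b => φ (Function.update (Function.update pv i (t₂ (pv i))) j (t (pv j)) a)
        (Function.update (Function.update pv' k (t₁ (pv' k))) l (w (pv' l)) b)).det) =
      ∑ σ : Equiv.Perm (Fin m), if k = l then 0 else if i = j then (0 : R) else
        ((Equiv.Perm.sign σ : ℤ) : R) *
        ∏ x, φ (Function.update (Function.update pv i (t₂ (pv i))) j (t (pv j)) (σ x))
        (Function.update (Function.update pv' k (t₁ (pv' k))) l (w (pv' l)) x) := by
    intro k l i j
    split_ifs
    · simp
    · simp
    · rw [Matrix.det_apply']; rfl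
  simp only [h1]
  have h2 : ∀ f : Fin m → Fin m → Fin m → Fin m → Equiv.Perm (Fin m) → R,
      ∑ k, ∑ l, ∑ i, ∑ j, ∑ σ, f k l i j σ = ∑ σ, ∑ l, ∑ k, ∑ i, ∑ j, f k l i j σ := by
    intro f
    rw [Finset.sum_comm]
    simp only [Finset.sum_comm (t := (Finset.univ : Finset (Equiv.Perm (Fin m))))]
  rw [h2, pluckerSum, pluckerSum]
  simp only [← Finset.sum_add_distrib]
  refine Finset.sum_congr rfl fun σ _ => Finset.sum_congr rfl fun l _ =>
    Finset.sum_congr rfl fun k _ => ?_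
  by_cases hkl : k = l
  · simp [hkl]
  have hlk : l ≠ k := fun h => hkl h.symm
  simp only [if_neg hkl, if_neg hlk]
  rw [← Equiv.sum_comp σ]
  have h3 : ∀ a b : Fin m, (if σ a = σ b then (0 : R) else
        ((Equiv.Perm.sign σ : ℤ) : R) *
        ∏ x, φ (Function.update (Function.update pv (σ a) (t₂ (pv (σ a)))) (σ b)
            (t (pv (σ b))) (σ x))
        (Function.update (Function.update pv' k (t₁ (pv' k))) l (w (pv' l)) x)) =
      (if a = k then if b = l then ((Equiv.Perm.sign σ : ℤ) : R) *
        ∏ x, (if x = l then φ (t (pv (σ x))) (w (pv' x)) else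
          if x = k then φ (t₂ (pv (σ x))) (t₁ (pv' x)) else φ (pv (σ x)) (pv' x)) else 0 else 0) +
      (if a = l then if b = k then ((Equiv.Perm.sign σ : ℤ) : R) *
        ∏ x, (if x = l then φ (t₂ (pv (σ x))) (w (pv' x)) else
          if x = k then φ (t (pv (σ x))) (t₁ (pv' x)) else φ (pv (σ x)) (pv' x)) else 0 else 0) := by
    intro a b
    simp only [Function.update_apply, EmbeddingLike.apply_eq_iff_eq]
    by_cases hab : a = b
    · subst hab
      rw [if_pos rfl]
      by_cases h : a = k
      · simp [h, hkl]
      · simp [h]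
    rw [if_neg hab]
    by_cases ha : a = k ∨ a = l
    · by_cases hb : b = k ∨ b = l
      · rcases ha with rfl | rfl <;> rcases hb with rfl | rfl
        · exact absurd rfl hab
        · simp only [if_true, if_neg hkl, add_zero]
          congr 1
          refine Finset.prod_congr rfl fun x _ => ?_
          split_ifs <;> simp_all
        · simp only [if_true, if_neg hlk, zero_add]
          congr 1
          refine Finset.prod_congr rfl fun x _ => ?_
          split_ifs <;> simp_all
        · exact absurd rfl hab
      · push Not at hb
        rw [Finset.prod_eq_zero (Finset.mem_univ b)]
        · simp [hb]
        · simp [hb, ht]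
    · push Not at ha
      rw [Finset.prod_eq_zero (Finset.mem_univ a)]
      · simp [ha]
      · simp [ha, hab, ht₂]
  have h4 : ∀ a, ∑ j, (if σ a = j then (0 : R) else
        ((Equiv.Perm.sign σ : ℤ) : R) *
        ∏ x, φ (Function.update (Function.update pv (σ a) (t₂ (pv (σ a)))) j
            (t (pv j)) (σ x))
        (Function.update (Function.update pv' k (t₁ (pv' k))) l (w (pv' l)) x)) = _ :=
    fun a => (Equiv.sum_comp σ _).symm
  simp only [h4, h3, Finset.sum_add_distrib, Finset.sum_ite_eq', Finset.mem_univ, if_true,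
    Finset.sum_ite_irrel, Finset.sum_const_zero]

/-- simplified Gauss equation for the `m`-Plücker embedding: for tangent
vectors `w, t, t₁, t₂` at a nondegenerate subspace `p` and all `p₁,…,p_m, p'₁,…,p'_m ∈ p`,
`⟨B(t, t₁*∘t₂)(p₁∧⋯∧p_m) + B(t₂, t₁*∘t)(p₁∧⋯∧p_m), D_w(p'₁∧⋯∧p'_m)⟩ =
  ⟨B(t₂, t)(p₁∧⋯∧p_m), B(t₁, w)(p'₁∧⋯∧p'_m)⟩`. -/
theorem statement13 {𝕜 : Type*} [RCLike 𝕜] {V : Type*} [AddCommGroup V] [Module 𝕜 V]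
    [FiniteDimensional 𝕜 V]
    (φ : V →ₗ[𝕜] V →ₛₗ[starRingEnd 𝕜] 𝕜)
    (hherm : ∀ x y : V, φ x y = starRingEnd 𝕜 (φ y x))
    (hnd : ∀ x : V, (∀ y : V, φ x y = 0) → x = 0)
    (p : Submodule 𝕜 V)
    (hpnd : ∀ x ∈ p, (∀ y ∈ p, φ x y = 0) → x = 0)
    (m : ℕ)
    (Φ : ⋀[𝕜]^m V →ₗ[𝕜] ⋀[𝕜]^m V →ₛₗ[starRingEnd 𝕜] 𝕜)
    (hΦ : ∀ v u : Fin m → V,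
      Φ (wedge 𝕜 m v) (wedge 𝕜 m u) = (Matrix.of fun i j => φ (v i) (u j)).det)
    (w t t₁ t₂ t₁s : V →ₗ[𝕜] V)
    -- `w`, `t`, `t₁`, `t₂` are tangent vectors at `p`: they map `p` into `p^⊥`, kill `p^⊥`
    (hwp : ∀ x ∈ p, ∀ y ∈ p, φ (w x) y = 0)
    (hwperp : ∀ x : V, (∀ y ∈ p, φ x y = 0) → w x = 0)
    (htp : ∀ x ∈ p, ∀ y ∈ p, φ (t x) y = 0)
    (htperp : ∀ x : V, (∀ y ∈ p, φ x y = 0) → t x = 0)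
    (ht₁p : ∀ x ∈ p, ∀ y ∈ p, φ (t₁ x) y = 0)
    (ht₁perp : ∀ x : V, (∀ y ∈ p, φ x y = 0) → t₁ x = 0)
    (ht₂p : ∀ x ∈ p, ∀ y ∈ p, φ (t₂ x) y = 0)
    (ht₂perp : ∀ x : V, (∀ y ∈ p, φ x y = 0) → t₂ x = 0)
    (hadj₁ : ∀ v u : V, φ (t₁ v) u = φ v (t₁s u))
    (Dw Ba Bb Bc Bd : ⋀[𝕜]^m V →ₗ[𝕜] ⋀[𝕜]^m V)
    (hDw : ∀ v : Fin m → V,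
      Dw (wedge 𝕜 m v) = ∑ i, wedge 𝕜 m (Function.update v i (w (v i))))
    -- `Ba = B(t, t₁*∘t₂)`
    (hBa : ∀ v : Fin m → V,
      Ba (wedge 𝕜 m v) = ∑ i, ∑ j, if i = j then 0 else
        wedge 𝕜 m (Function.update (Function.update v i (t (v i))) j (t₁s (t₂ (v j)))))
    -- `Bb = B(t₂, t₁*∘t)`
    (hBb : ∀ v : Fin m → V,
      Bb (wedge 𝕜 m v) = ∑ i, ∑ j, if i = j then 0 else
        wedge 𝕜 m (Function.update (Function.update v i (t₂ (v i))) j (t₁s (t (v j)))))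
    -- `Bc = B(t₂, t)`
    (hBc : ∀ v : Fin m → V,
      Bc (wedge 𝕜 m v) = ∑ i, ∑ j, if i = j then 0 else
        wedge 𝕜 m (Function.update (Function.update v i (t₂ (v i))) j (t (v j))))
    -- `Bd = B(t₁, w)`
    (hBd : ∀ v : Fin m → V,
      Bd (wedge 𝕜 m v) = ∑ i, ∑ j, if i = j then 0 else
        wedge 𝕜 m (Function.update (Function.update v i (t₁ (v i))) j (w (v j)))) :
    ∀ pv pv' : Fin m → V, (∀ i, pv i ∈ p) → (∀ i, pv' i ∈ p) →
      Φ (Ba (wedge 𝕜 m pv) + Bb (wedge 𝕜 m pv)) (Dw (wedge 𝕜 m pv')) =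
        Φ (Bc (wedge 𝕜 m pv)) (Bd (wedge 𝕜 m pv')) := by
  intro pv pv' hp hp'
  have e1 := gauss_lhs (fun x y => φ x y) pv pv' t (fun x => t₁s (t₂ x)) w
    (fun i j => htp _ (hp i) _ (hp' j))
  have e2 := gauss_lhs (fun x y => φ x y) pv pv' t₂ (fun x => t₁s (t x)) w
    (fun i j => ht₂p _ (hp i) _ (hp' j))
  have e3 := gauss_rhs (fun x y => φ x y) pv pv' t t₂ t₁ w
    (fun i j => htp _ (hp i) _ (hp' j)) (fun i j => ht₂p _ (hp i) _ (hp' j))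
  have hadj : ∀ x y, φ (t₁s x) y = φ x (t₁ y) := by
    intro x y
    rw [hherm, ← hadj₁, ← hherm]
  simp only [hadj] at e1 e2
  rw [← e1, ← e2] at e3
  have z1 : ∀ (c : Prop) [Decidable c] (x y : ⋀[𝕜]^m V),
      Φ (if c then 0 else x) y = if c then 0 else Φ x y := by
    intro c _ x y; split_ifs <;> simp
  have z2 : ∀ (c : Prop) [Decidable c] (x y : ⋀[𝕜]^m V),
      Φ x (if c then 0 else y) = if c then 0 else Φ x y := by
    intro c _ x y; split_ifs <;> simp
  rw [hBa, hBb, hBc, hBd, hDw]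
  simp only [map_add, map_sum, LinearMap.add_apply, LinearMap.sum_apply, z1, z2, hΦ]
  rw [Finset.sum_add_distrib, ← e3]
  refine Finset.sum_congr rfl fun k _ => Finset.sum_congr rfl fun l _ =>
    Finset.sum_congr rfl fun i _ => Finset.sum_congr rfl fun j _ => ?_
  by_cases h1 : k = l <;> by_cases h2 : i = j <;> simp only [h1, h2, if_true, if_false]
end

section
/- If t : V → V is a linear map of rank at most one, then B(t,t) = 0 as a linear endomorphism of ⋀^m V, for every m. (This vanishing, applied to the rank-one tangent vectors t_{ij} sending one basis vector of p to a basis vector of p^⊥, is the content of the minimality of the m-Plücker embedding: the second fundamental form B has vanishing trace.) -/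
/-- if `t : V → V` is a linear map of rank at most one, then `B(t,t) = 0` as a
linear endomorphism of `⋀^m V`, for every `m` (minimality of the `m`-Plücker embedding). -/
theorem statement14 {K : Type*} [Field K] {V : Type*} [AddCommGroup V] [Module K V]
    (m : ℕ) (t : V →ₗ[K] V) (hrank : LinearMap.rank t ≤ 1)
    (B : ⋀[K]^m V →ₗ[K] ⋀[K]^m V)
    (hB : ∀ v : Fin m → V,
      B (wedge K m v) = ∑ i, ∑ j, if i = j then 0 else
        wedge K m (Function.update (Function.update v i (t (v i))) j (t (v j)))) :
    B = 0 := by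
  obtain ⟨w, hw⟩ : ∃ w : V, LinearMap.range t ≤ Submodule.span K {w} :=
    (rank_submodule_le_one_iff' (LinearMap.range t)).1 hrank
  have hc : ∀ x, ∃ c : K, c • w = t x := fun x =>
    Submodule.mem_span_singleton.1 (hw (LinearMap.mem_range_self t x))
  apply exteriorPower.linearMap_ext
  ext1 v
  change B (wedge K m v) = 0
  rw [hB]
  refine Finset.sum_eq_zero fun i _ => Finset.sum_eq_zero fun j _ => ?_
  split_ifs with hij
  · rfl
  · obtain ⟨a, ha⟩ := hc (v i)
    obtain ⟨b, hb⟩ := hc (v j)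
    apply Subtype.ext
    change ExteriorAlgebra.ιMulti K m _ = 0
    rw [← ha, ← hb, AlternatingMap.map_update_smul, Function.update_comm hij,
      AlternatingMap.map_update_smul, AlternatingMap.map_eq_zero_of_eq _ _ (i := i) (j := j) _ hij,
      smul_zero, smul_zero]
    simp [Function.update_of_ne (Ne.symm hij)]
end

section
/- Let p and q be finite-dimensional real vector spaces with nondegenerate symmetric bilinear forms, dim p = k, dim q = n − k (so n = dim p + dim q). For all linear maps t, t₁ : p → q, the trace of the linear endomorphism of Hom(p,q) given by t₂ ↦ t∘t₁*∘t₂ + t₂∘t₁*∘t − t∘t₂*∘t₁ − t₁∘t₂*∘t equals (n − 2)·tr(t₁*∘t). (This is the algebraic content of the statement that Gr⁰_ℝ(k,V) is Einstein with constant n − 2, the curvature tensor being R(t₁,t₂)t = tt₁*t₂ + t₂t₁*t − tt₂*t₁ − t₁t₂*t.) -/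
theorem aux_trace_basis {V ι : Type*} [AddCommGroup V] [Module ℝ V] [Fintype ι] [DecidableEq ι]
    (b : Module.Basis ι ℝ V) (f : V →ₗ[ℝ] V) :
    LinearMap.trace ℝ V f = ∑ i, b.coord i (f (b i)) := by
  rw [LinearMap.trace_eq_matrix_trace ℝ b, Matrix.trace]
  simp [LinearMap.toMatrix_apply]

theorem aux_trace_hom {P Q ι κ : Type*} [AddCommGroup P] [Module ℝ P]
    [AddCommGroup Q] [Module ℝ Q] [Fintype ι] [DecidableEq ι] [Fintype κ] [DecidableEq κ]
    (b : Module.Basis ι ℝ P) (c : Module.Basis κ ℝ Q)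
    (G : (P →ₗ[ℝ] Q) →ₗ[ℝ] (P →ₗ[ℝ] Q)) :
    LinearMap.trace ℝ (P →ₗ[ℝ] Q) G
      = ∑ i, ∑ j, c.coord j (G ((b.coord i).smulRight (c j)) (b i)) := by
  rw [aux_trace_basis (b.linearMap c) G, Fintype.sum_prod_type, Finset.sum_comm]
  refine Finset.sum_congr rfl fun i _ => Finset.sum_congr rfl fun j _ => ?_
  have h : b.linearMap c (j, i) = (b.coord i).smulRight (c j) := by
    apply b.ext
    intro l
    rw [Module.Basis.linearMap_apply_apply]
    simp [Finsupp.single_apply, eq_comm]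
  rw [h]
  have h2 : ∀ M : Matrix κ ι ℝ, (Matrix.stdBasis ℝ κ ι).repr M (j, i) = M j i := fun M => by
    conv_rhs => rw [← (Matrix.stdBasis ℝ κ ι).sum_repr M]
    simp [Matrix.stdBasis_eq_single, Matrix.sum_apply, Matrix.single_apply, Fintype.sum_prod_type, ite_and]
  simp [Module.Basis.linearMap, h2, LinearMap.toMatrix_apply]

/-- (`Gr⁰_ℝ(k,V)` is Einstein with constant `n − 2`.) Let `p` and `q` be
finite-dimensional real vector spaces with nondegenerate symmetric bilinear forms,
`dim p = k`, `dim q = n − k` (so `n = dim p + dim q`). For all linear maps `t, t₁ : p → q`,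
the trace of the linear endomorphism of `Hom(p,q)` given by
`t₂ ↦ t∘t₁*∘t₂ + t₂∘t₁*∘t − t∘t₂*∘t₁ − t₁∘t₂*∘t` equals `(n − 2)·tr(t₁*∘t)`. -/
theorem statement15 {P Q : Type*}
    [AddCommGroup P] [Module ℝ P] [FiniteDimensional ℝ P]
    [AddCommGroup Q] [Module ℝ Q] [FiniteDimensional ℝ Q]
    (φp : P →ₗ[ℝ] P →ₗ[ℝ] ℝ) (φq : Q →ₗ[ℝ] Q →ₗ[ℝ] ℝ)
    (hpsym : ∀ x y : P, φp x y = φp y x) (hqsym : ∀ x y : Q, φq x y = φq y x)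
    (hpnd : ∀ x : P, (∀ y : P, φp x y = 0) → x = 0)
    (hqnd : ∀ x : Q, (∀ y : Q, φq x y = 0) → x = 0)
    (k n : ℕ) (hk : Module.finrank ℝ P = k)
    (hn : Module.finrank ℝ P + Module.finrank ℝ Q = n)
    -- `adj s` is the adjoint `s*` of `s : P → Q` with respect to the two forms
    (adj : (P →ₗ[ℝ] Q) → (Q →ₗ[ℝ] P))
    (hadj : ∀ (s : P →ₗ[ℝ] Q) (x : P) (y : Q), φq (s x) y = φp x (adj s y))
    (t t₁ : P →ₗ[ℝ] Q) :
    ∃ F : (P →ₗ[ℝ] Q) →ₗ[ℝ] (P →ₗ[ℝ] Q),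
      (∀ t₂ : P →ₗ[ℝ] Q,
        F t₂ = t ∘ₗ adj t₁ ∘ₗ t₂ + t₂ ∘ₗ adj t₁ ∘ₗ t - t ∘ₗ adj t₂ ∘ₗ t₁ - t₁ ∘ₗ adj t₂ ∘ₗ t) ∧
      LinearMap.trace ℝ (P →ₗ[ℝ] Q) F = ((n : ℝ) - 2) * LinearMap.trace ℝ P (adj t₁ ∘ₗ t) := by
  classical
  have hpnd' : ∀ x y : P, (∀ z, φp z x = φp z y) → x = y := by
    intro x y h
    refine sub_eq_zero.1 (hpnd _ fun z => ?_)
    rw [hpsym, map_sub, h, sub_self]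
  have hadd : ∀ s s', adj (s + s') = adj s + adj s' := by
    intro s s'
    ext y
    apply hpnd'
    intro z
    simp [← hadj]
  have hsmul : ∀ (r : ℝ) s, adj (r • s) = r • adj s := by
    intro r s
    ext y
    apply hpnd'
    intro z
    simp [← hadj]
  let F : (P →ₗ[ℝ] Q) →ₗ[ℝ] (P →ₗ[ℝ] Q) :=
    { toFun := fun t₂ => t ∘ₗ adj t₁ ∘ₗ t₂ + t₂ ∘ₗ adj t₁ ∘ₗ t - t ∘ₗ adj t₂ ∘ₗ t₁
        - t₁ ∘ₗ adj t₂ ∘ₗ t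
      map_add' := by
        intro x y
        ext v
        simp [hadd]
        abel
      map_smul' := by
        intro r x
        ext v
        simp [hsmul, smul_sub, smul_add] }
  refine ⟨F, fun _ => rfl, ?_⟩
  let Bp : LinearMap.BilinForm ℝ P := φp
  let Bq : LinearMap.BilinForm ℝ Q := φq
  have sp : Bp.IsSymm := ⟨fun x y => hpsym x y⟩
  have sq : Bq.IsSymm := ⟨fun x y => hqsym x y⟩
  have np : Bp.Nondegenerate := ⟨hpnd, fun x h => hpnd x fun y => by rw [hpsym]; exact h y⟩
  have nq : Bq.Nondegenerate := ⟨hqnd, fun x h => hqnd x fun y => by rw [hqsym]; exact h y⟩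
  let b := Module.finBasis ℝ P
  let c := Module.finBasis ℝ Q
  let b' := Bp.dualBasis np b
  let c' := Bq.dualBasis nq c
  have hb : ∀ i j, φp (b' i) (b j) = if j = i then 1 else 0 :=
    fun i j => LinearMap.BilinForm.apply_dualBasis_left np b i j
  have hc : ∀ i j, φq (c' i) (c j) = if j = i then 1 else 0 :=
    fun i j => LinearMap.BilinForm.apply_dualBasis_left nq c i j
  have hbc : ∀ i x, b.coord i x = φp (b' i) x := by
    intro i x
    have : b.coord i = φp (b' i) := b.ext fun j => by simp [hb, Finsupp.single_apply]
    rw [this]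
  have hbc' : ∀ i x, b'.coord i x = φp (b i) x := by
    intro i x
    have : b'.coord i = φp (b i) := b'.ext fun j => by
      rw [hpsym, hb]; simp [Finsupp.single_apply, eq_comm]
    rw [this]
  have hcc : ∀ j y, c.coord j y = φq (c' j) y := by
    intro i x
    have : c.coord i = φq (c' i) := c.ext fun j => by simp [hc, Finsupp.single_apply]
    rw [this]
  have hE : ∀ i j y, adj ((b.coord i).smulRight (c j)) y = φq (c j) y • b' i := by
    intro i j y
    apply hpnd'
    intro z
    rw [← hadj, LinearMap.smulRight_apply, hbc, hpsym]
    simp [mul_comm]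
  have hsum : ∀ y z, ∑ j, c.coord j y * φq (c j) z = φq y z := by
    intro y z
    conv_rhs => rw [← c.sum_repr y]
    simp only [map_sum, LinearMap.sum_apply, map_smul, LinearMap.smul_apply, smul_eq_mul,
      Module.Basis.coord_apply]
  -- the key sum
  have key : ∀ s s' : P →ₗ[ℝ] Q,
      ∑ i, ∑ j, c.coord j (s (adj ((b.coord i).smulRight (c j)) (s' (b i))))
        = ∑ i, φq (s (b' i)) (s' (b i)) := by
    intro s s'
    refine Finset.sum_congr rfl fun i _ => ?_
    rw [← hsum]
    refine Finset.sum_congr rfl fun j _ => ?_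
    rw [hE, map_smul, map_smul, smul_eq_mul, mul_comm]
  have k1 : ∑ i, φq (t₁ (b' i)) (t (b i)) = LinearMap.trace ℝ P (adj t₁ ∘ₗ t) := by
    rw [aux_trace_basis b]
    refine Finset.sum_congr rfl fun i _ => ?_
    rw [hbc, hadj]
    rfl
  have k2 : ∑ i, φq (t (b' i)) (t₁ (b i)) = LinearMap.trace ℝ P (adj t₁ ∘ₗ t) := by
    rw [aux_trace_basis b']
    refine Finset.sum_congr rfl fun i _ => ?_
    rw [hbc', hqsym, hadj]
    rfl
  have k3 : ∑ i, ∑ j, c.coord j (t (adj t₁ (((b.coord i).smulRight (c j)) (b i))))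
      = (Module.finrank ℝ P : ℝ) * LinearMap.trace ℝ P (adj t₁ ∘ₗ t) := by
    rw [LinearMap.trace_comp_comm', aux_trace_basis c]
    simp
  have k4 : ∑ i, ∑ j, c.coord j (((b.coord i).smulRight (c j)) (adj t₁ (t (b i))))
      = (Module.finrank ℝ Q : ℝ) * LinearMap.trace ℝ P (adj t₁ ∘ₗ t) := by
    rw [aux_trace_basis b]
    simp [Finset.mul_sum]
  rw [aux_trace_hom b c F]
  have hF : ∀ i j, c.coord j (F ((b.coord i).smulRight (c j)) (b i))
      = c.coord j (t (adj t₁ (((b.coord i).smulRight (c j)) (b i))))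
        + c.coord j (((b.coord i).smulRight (c j)) (adj t₁ (t (b i))))
        - c.coord j (t (adj ((b.coord i).smulRight (c j)) (t₁ (b i))))
        - c.coord j (t₁ (adj ((b.coord i).smulRight (c j)) (t (b i)))) := by
    intro i j
    rw [← map_add, ← map_sub, ← map_sub]
    rfl
  simp only [hF, Finset.sum_add_distrib, Finset.sum_sub_distrib]
  rw [k3, k4, key, key, k1, k2, ← hn]
  push_cast
  ring
end

section
/- Let p and q be finite-dimensional complex vector spaces with nondegenerate hermitian forms, dim_ℂ p = k, dim_ℂ q = n − k (so n = dim_ℂ p + dim_ℂ q). For all ℂ-linear maps t, t₁ : p → q, the map t₂ ↦ t∘t₁*∘t₂ + t₂∘t₁*∘t − t∘t₂*∘t₁ − t₁∘t₂*∘t is an ℝ-linear endomorphism of Hom_ℂ(p,q) (the last two terms are conjugate-linear in t₂), and its trace as an ℝ-linear endomorphism of the underlying real vector space of Hom_ℂ(p,q) equals 2n·Re(tr(t₁*∘t)). (This is the algebraic content of the statement that Gr⁰_ℂ(k,V) is Einstein with constant 2n.) -/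
lemma real_trace_aux {V : Type*} [AddCommGroup V] [Module ℂ V] [FiniteDimensional ℂ V]
    (f : V →ₗ[ℂ] V) :
    LinearMap.trace ℝ V (f.restrictScalars ℝ) = 2 * (LinearMap.trace ℂ V f).re := by
  classical
  let b := Module.finBasis ℂ V
  rw [LinearMap.trace_eq_matrix_trace ℝ (Complex.basisOneI.smulTower b),
    LinearMap.trace_eq_matrix_trace ℂ b]
  simp only [Matrix.trace, Matrix.diag, LinearMap.toMatrix_apply]
  rw [Fintype.sum_prod_type, Fin.sum_univ_two, Complex.re_sum, ← Finset.sum_add_distrib,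
    Finset.mul_sum]
  refine Finset.sum_congr rfl fun i _ => ?_
  simp [Module.Basis.smulTower_repr, Module.Basis.smulTower_apply, Complex.coe_basisOneI_repr]
  ring

lemma trace_left_aux {P Q : Type*}
    [AddCommGroup P] [Module ℂ P] [FiniteDimensional ℂ P]
    [AddCommGroup Q] [Module ℂ Q] [FiniteDimensional ℂ Q] (a : Q →ₗ[ℂ] Q) :
    LinearMap.trace ℂ (P →ₗ[ℂ] Q) (a.compRight ℂ) =
      Module.finrank ℂ P * LinearMap.trace ℂ Q a := by
  have h : a.compRight ℂ = (dualTensorHomEquiv ℂ P Q).conj (TensorProduct.map LinearMap.id a) := by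
    have := dualTensorHom_comp_lTensor (R := ℂ) (M := P) a
    ext x : 1
    obtain ⟨y, rfl⟩ := (dualTensorHomEquiv ℂ P Q).surjective x
    simp only [LinearEquiv.conj_apply, LinearMap.comp_apply, LinearEquiv.coe_coe,
      LinearEquiv.symm_apply_apply]
    exact (LinearMap.congr_fun this y).symm
  rw [h, LinearMap.trace_conj', LinearMap.trace_tensorProduct', LinearMap.trace_id,
    Subspace.dual_finrank_eq]

lemma trace_right_aux {P Q : Type*}
    [AddCommGroup P] [Module ℂ P] [FiniteDimensional ℂ P]
    [AddCommGroup Q] [Module ℂ Q] [FiniteDimensional ℂ Q] (a : P →ₗ[ℂ] P) :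
    LinearMap.trace ℂ (P →ₗ[ℂ] Q) (a.lcomp ℂ Q) =
      Module.finrank ℂ Q * LinearMap.trace ℂ P a := by
  have h : a.lcomp ℂ Q = (dualTensorHomEquiv ℂ P Q).conj
      (TensorProduct.map a.dualMap LinearMap.id) := by
    have := dualTensorHom_comp_rTensor_dualMap (R := ℂ) (P := Q) a
    ext x : 1
    obtain ⟨y, rfl⟩ := (dualTensorHomEquiv ℂ P Q).surjective x
    simp only [LinearEquiv.conj_apply, LinearMap.comp_apply, LinearEquiv.coe_coe,
      LinearEquiv.symm_apply_apply]
    exact (LinearMap.congr_fun this y).symm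
  have h2 : LinearMap.trace ℂ (Module.Dual ℂ P) a.dualMap = LinearMap.trace ℂ P a :=
    LinearMap.trace_transpose' a
  rw [h, LinearMap.trace_conj', LinearMap.trace_tensorProduct', LinearMap.trace_id, h2, mul_comm]

lemma antilinear_trace_aux {V : Type*} [AddCommGroup V] [Module ℂ V]
    (B : V →ₗ[ℝ] V) (hB : ∀ x, B (Complex.I • x) = - (Complex.I • B x)) :
    LinearMap.trace ℝ V B = 0 := by
  let J : V →ₗ[ℝ] V := (LinearMap.lsmul ℂ V Complex.I).restrictScalars ℝ
  have hJ : ∀ x, J x = Complex.I • x := fun x => rfl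
  have h1 : B = (J * B) * J := by
    ext x
    simp [Module.End.mul_apply, hJ, hB, smul_smul]
  have h2 : J * (J * B) = -B := by
    ext x
    simp [Module.End.mul_apply, hJ, smul_smul]
  have h3 : LinearMap.trace ℝ V B = - LinearMap.trace ℝ V B := by
    conv_lhs => rw [h1, LinearMap.trace_mul_comm, h2, map_neg]
  linarith

/-- (`Gr⁰_ℂ(k,V)` is Einstein with constant `2n`.) Let `p` and `q` be
finite-dimensional complex vector spaces with nondegenerate hermitian forms,
`dim_ℂ p = k`, `dim_ℂ q = n − k` (so `n = dim_ℂ p + dim_ℂ q`). For all `ℂ`-linear maps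
`t, t₁ : p → q`, the map `t₂ ↦ t∘t₁*∘t₂ + t₂∘t₁*∘t − t∘t₂*∘t₁ − t₁∘t₂*∘t` is an `ℝ`-linear
endomorphism of `Hom_ℂ(p,q)` and its trace as an `ℝ`-linear endomorphism of the underlying
real vector space equals `2n·Re(tr(t₁*∘t))`. -/
theorem statement16 {P Q : Type*}
    [AddCommGroup P] [Module ℂ P] [FiniteDimensional ℂ P]
    [AddCommGroup Q] [Module ℂ Q] [FiniteDimensional ℂ Q]
    (φp : P →ₗ[ℂ] P →ₛₗ[starRingEnd ℂ] ℂ) (φq : Q →ₗ[ℂ] Q →ₛₗ[starRingEnd ℂ] ℂ)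
    (hpherm : ∀ x y : P, φp x y = starRingEnd ℂ (φp y x))
    (hqherm : ∀ x y : Q, φq x y = starRingEnd ℂ (φq y x))
    (hpnd : ∀ x : P, (∀ y : P, φp x y = 0) → x = 0)
    (hqnd : ∀ x : Q, (∀ y : Q, φq x y = 0) → x = 0)
    (k n : ℕ) (hk : Module.finrank ℂ P = k)
    (hn : Module.finrank ℂ P + Module.finrank ℂ Q = n)
    -- `adj s` is the adjoint `s*` of `s : P → Q` with respect to the two forms
    (adj : (P →ₗ[ℂ] Q) → (Q →ₗ[ℂ] P))
    (hadj : ∀ (s : P →ₗ[ℂ] Q) (x : P) (y : Q), φq (s x) y = φp x (adj s y))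
    (t t₁ : P →ₗ[ℂ] Q) :
    ∃ F : (P →ₗ[ℂ] Q) →ₗ[ℝ] (P →ₗ[ℂ] Q),
      (∀ t₂ : P →ₗ[ℂ] Q,
        F t₂ = t ∘ₗ adj t₁ ∘ₗ t₂ + t₂ ∘ₗ adj t₁ ∘ₗ t - t ∘ₗ adj t₂ ∘ₗ t₁ - t₁ ∘ₗ adj t₂ ∘ₗ t) ∧
      LinearMap.trace ℝ (P →ₗ[ℂ] Q) F =
        2 * (n : ℝ) * (LinearMap.trace ℂ P (adj t₁ ∘ₗ t)).re := by
  have key : ∀ u v : P, (∀ x, φp x u = φp x v) → u = v := by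
    intro u v h
    rw [← sub_eq_zero]
    refine hpnd _ fun y => ?_
    rw [hpherm, map_sub, h, sub_self, map_zero]
  have hadd : ∀ s s' : P →ₗ[ℂ] Q, adj (s + s') = adj s + adj s' := by
    intro s s'
    ext y
    refine key _ _ fun x => ?_
    rw [← hadj, LinearMap.add_apply, LinearMap.add_apply, map_add, map_add, LinearMap.add_apply,
      hadj, hadj]
  have hsmul : ∀ (c : ℂ) (s : P →ₗ[ℂ] Q), adj (c • s) = (starRingEnd ℂ c) • adj s := by
    intro c s
    ext y
    refine key _ _ fun x => ?_
    rw [← hadj, LinearMap.smul_apply, LinearMap.smul_apply, map_smul, LinearMap.smul_apply,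
      hadj, LinearMap.map_smulₛₗ, Complex.conj_conj]
  have hsmulR : ∀ (c : ℝ) (s : P →ₗ[ℂ] Q), adj (c • s) = (c : ℂ) • adj s := by
    intro c s
    have h := hsmul (c : ℂ) s
    rw [Complex.conj_ofReal] at h
    rw [← h]
    rfl
  let B : (P →ₗ[ℂ] Q) →ₗ[ℝ] (P →ₗ[ℂ] Q) :=
    { toFun := fun t₂ => t ∘ₗ adj t₂ ∘ₗ t₁ + t₁ ∘ₗ adj t₂ ∘ₗ t
      map_add' := by
        intro x y
        ext z
        simp [hadd]
        abel
      map_smul' := by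
        intro c x
        ext z
        simp [hsmulR] }
  have hB : ∀ x, B x = t ∘ₗ adj x ∘ₗ t₁ + t₁ ∘ₗ adj x ∘ₗ t := fun x => rfl
  have hB0 : LinearMap.trace ℝ (P →ₗ[ℂ] Q) B = 0 := by
    apply antilinear_trace_aux
    intro x
    ext z
    simp [hB, hsmul]
    abel
  let A : (P →ₗ[ℂ] Q) →ₗ[ℂ] (P →ₗ[ℂ] Q) :=
    (t ∘ₗ adj t₁).compRight ℂ + (adj t₁ ∘ₗ t).lcomp ℂ Q
  refine ⟨A.restrictScalars ℝ - B, fun t₂ => ?_, ?_⟩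
  · ext z
    simp [A, hB]
    abel
  · rw [map_sub, hB0, real_trace_aux, map_add, trace_left_aux, trace_right_aux,
      LinearMap.trace_comp_comm' t (adj t₁), ← add_mul, ← Nat.cast_add, hn]
    simp
    ring
end

section
/- Let p and q be finite-dimensional real vector spaces with nondegenerate symmetric bilinear forms. For all linear maps t, t₁ : p → q, the trace of the linear endomorphism of Hom(p,q) given by t₂ ↦ t∘t₂*∘t₁ equals tr(t*∘t₁). -/
/-- for finite-dimensional real vector spaces `p, q` with nondegenerate
symmetric bilinear forms and linear maps `t, t₁ : p → q`, the trace of the linear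
endomorphism of `Hom(p,q)` given by `t₂ ↦ t∘t₂*∘t₁` equals `tr(t*∘t₁)`. -/
theorem statement17 {P Q : Type*}
    [AddCommGroup P] [Module ℝ P] [FiniteDimensional ℝ P]
    [AddCommGroup Q] [Module ℝ Q] [FiniteDimensional ℝ Q]
    (φp : P →ₗ[ℝ] P →ₗ[ℝ] ℝ) (φq : Q →ₗ[ℝ] Q →ₗ[ℝ] ℝ)
    (hpsym : ∀ x y : P, φp x y = φp y x) (hqsym : ∀ x y : Q, φq x y = φq y x)
    (hpnd : ∀ x : P, (∀ y : P, φp x y = 0) → x = 0)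
    (hqnd : ∀ x : Q, (∀ y : Q, φq x y = 0) → x = 0)
    -- `adj s` is the adjoint `s*` of `s : P → Q` with respect to the two forms
    (adj : (P →ₗ[ℝ] Q) → (Q →ₗ[ℝ] P))
    (hadj : ∀ (s : P →ₗ[ℝ] Q) (x : P) (y : Q), φq (s x) y = φp x (adj s y))
    (t t₁ : P →ₗ[ℝ] Q) :
    ∃ F : (P →ₗ[ℝ] Q) →ₗ[ℝ] (P →ₗ[ℝ] Q),
      (∀ t₂ : P →ₗ[ℝ] Q, F t₂ = t ∘ₗ adj t₂ ∘ₗ t₁) ∧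
      LinearMap.trace ℝ (P →ₗ[ℝ] Q) F = LinearMap.trace ℝ P (adj t ∘ₗ t₁) := by
  have hinj : Function.Injective φp := by
    rw [injective_iff_map_eq_zero]
    intro x hx
    exact hpnd x (fun y => by rw [hx]; rfl)
  have hsurj : Function.Surjective φp :=
    (LinearMap.injective_iff_surjective_of_finrank_eq_finrank
      (Subspace.dual_finrank_eq (K := ℝ) (V := P)).symm).1 hinj
  have hext : ∀ u v : P, (∀ x, φp x u = φp x v) → u = v := by
    intro u v h
    apply hinj
    ext x
    rw [hpsym u x, hpsym v x, h]
  let F : (P →ₗ[ℝ] Q) →ₗ[ℝ] (P →ₗ[ℝ] Q) :=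
    { toFun := fun t₂ => t ∘ₗ adj t₂ ∘ₗ t₁
      map_add' := by
        intro a b
        have h : adj (a + b) = adj a + adj b := by
          ext y
          apply hext
          intro x
          rw [← hadj]
          simp [hadj]
        ext x
        simp [h]
      map_smul' := by
        intro r a
        have h : adj (r • a) = r • adj a := by
          ext y
          apply hext
          intro x
          rw [← hadj]
          simp [hadj]
        ext x
        simp [h] }
  refine ⟨F, fun _ => rfl, ?_⟩
  let b := Module.finBasis ℝ P
  let c := Module.finBasis ℝ Q
  choose sh hsh using fun j => hsurj (b.coord j)
  have hF : ∀ i j, F (b.linearMap c (i, j)) (b j) = φq (c i) (t₁ (b j)) • t (sh j) := by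
    intro i j
    have h : adj (b.linearMap c (i, j)) (t₁ (b j)) = φq (c i) (t₁ (b j)) • sh j := by
      apply hext
      intro x
      rw [← hadj, map_smul, hpsym x, hsh, Module.Basis.linearMap_apply]
      have hx : (Matrix.toLin b c (Matrix.single i j 1)) x = b.repr x j • c i := by
        rw [Matrix.toLin_apply]
        simp [Matrix.single_mulVec, Function.update_apply, ite_smul]
      rw [Matrix.stdBasis_eq_single, hx]
      simp [mul_comm]
    change t (adj _ (t₁ (b j))) = _
    rw [h, map_smul]
  rw [LinearMap.trace_eq_matrix_trace ℝ (b.linearMap c),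
    LinearMap.trace_eq_matrix_trace ℝ b, Matrix.trace, Matrix.trace, Fintype.sum_prod_type_right]
  refine Finset.sum_congr rfl fun j _ => ?_
  have h1 : ∀ i, Matrix.diag (LinearMap.toMatrix (b.linearMap c) (b.linearMap c) F) (i, j)
      = φq (c i) (t₁ (b j)) * c.repr (t (sh j)) i := by
    intro i
    rw [Matrix.diag_apply, LinearMap.toMatrix_apply]
    have : (b.linearMap c).repr (F (b.linearMap c (i, j))) (i, j)
        = c.repr (F (b.linearMap c (i, j)) (b j)) i := by
      rw [← LinearMap.toMatrix_apply b c]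
      rfl
    rw [this, hF]
    simp
  simp_rw [h1]
  rw [Matrix.diag_apply, LinearMap.toMatrix_apply, ← Module.Basis.coord_apply, ← hsh,
    LinearMap.comp_apply, ← hadj]
  conv_rhs => rw [← c.sum_repr (t (sh j))]
  simp only [map_sum, map_smul, LinearMap.sum_apply, LinearMap.smul_apply, smul_eq_mul]
  exact Finset.sum_congr rfl fun i _ => mul_comm _ _
end
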